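/- arXiv:1810.06170 — 2 statements merged into one kernel-verified Lean document; each statement's English description precedes it below -/
import Mathlib

section
/- Let d ≥ 2 and let 𝒮 be a weighted step set satisfying the standing assumptions with negative drift (B(1) < A(1)), and suppose every step i ∈ 𝒮 with positive weight has i_d ≠ 0 (i.e. Q(1) = 0). Set ρ = √(A(1)/B(1)), and for x ∈ {ρ, −ρ} set S(1,x) = A(1)/x + xB(1), b_k(1,x) = Σ_{i∈𝒮, i_k=1} w_i x^{i_d}, and C_x = [S(1,x)·x / (2 π^{d/2} A(1) (1 − 1/x)²)] · √( S(1,x)^d / (x · b_1(1,x)⋯b_{d−1}(1,x) · B(1)) ), where the radicand in the square root is positive for both x = ρ and x = −ρ. Then there is a constant c > 0 such that for all n ≥ 1, | s_n − n^{−d/2−1}( S(1,ρ)^n C_ρ + S(1,−ρ)^n C_{−ρ} ) | ≤ c · S(1,ρ)^n · n^{−d/2−2}. -/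
open Finset

/-- The weighted number of walks of length `n` with steps in `S` (weights `w`),
beginning at the origin and confined to the non-negative orthant. -/
noncomputable def weightedWalkCount (d : ℕ) (S : Finset (Fin d → ℤ))
    (w : (Fin d → ℤ) → ℝ) (n : ℕ) : ℝ :=
  ∑ u : Fin n → S,
    if (∀ k : Fin n, ∀ m : Fin d, 0 ≤ ∑ j ∈ Finset.Iic k, (u j : Fin d → ℤ) m)
    then ∏ k : Fin n, w (u k) else 0

/-!
Every step moves up or down in the distinguished coordinate, so a walk is a one-dimensional walk in
that coordinate, with operators recording the other coordinates as its weights. In each of these,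
symmetry makes the walk a simple symmetric one observed only when it moves: the probability that it
stays non-negative is the mean of `survivalProb N`, where `N` is the number of moves. Hence the
moves may be counted instead of followed, and the operators that count them commute. The reflection
principle then gives
`s_n = ∑ p + q = n, ballotNumber 1 p q * B(1) ^ p * A(1) ^ q * lateralSurvivalProb p q`.

With `A(1) = ρ ^ 2 * B(1)` and `p - q = k`, the weight of a summand is
`(2 * ρ * B(1)) ^ n * ρ ^ (-k) / 2 ^ n`, so the drift `ρ > 1` concentrates the sum on bounded `k`.
There the ballot number is `2 ^ n * (k + 1) * (2 / n) * √(2 / (π * n))`, by the Wallis product, and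
the survival probability is `∏ j, √(2 / (π * ν j * n))`, where `ν j` is the rate of moves in the
`j`-th coordinate, because `N` concentrates at `ν j * n`. Both hold with relative error polynomial
in `k` divided by `n`. What remains is the sum of `(k + 1) * ρ ^ (-k)` over the `k` of the parity of
`n`, and the even and odd parts of `1 / (1 - z) ^ 2` at `z = 1 / ρ` produce the terms of `ρ` and
`-ρ`.
-/

/-- Walks on `ℤ` with `n` steps `±1` started at `y` and confined to the non-negative half-line,
each weighted by the product of its step weights, `a` for a step down and `b` for a step up.
Weights are allowed not to commute, so that operators can be used as weights. -/
def ballotSum {R : Type*} [Semiring R] (a b : R) : ℕ → ℤ → R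
  | 0, y => if 0 ≤ y then 1 else 0
  | n + 1, y => if 0 ≤ y then a * ballotSum a b n (y - 1) + b * ballotSum a b n (y + 1) else 0

/-- The number of walks with `p` steps up and `q` steps down started at `s - 1` and confined to the
non-negative half-line, in the closed form given by the reflection principle. -/
def ballotNumber (s p q : ℕ) : ℤ :=
  if q < p + s then (p + q).choose p - (p + q).choose (p + s) else 0

section BallotSum

variable {R : Type*}

lemma ballotSum_of_neg [Semiring R] (a b : R) (n : ℕ) {y : ℤ} (hy : y < 0) :
    ballotSum a b n y = 0 := by
  cases n <;> simp [ballotSum, hy.not_ge]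

lemma ballotSum_zero_of_nonneg [Semiring R] (a b : R) {y : ℤ} (hy : 0 ≤ y) :
    ballotSum a b 0 y = 1 := if_pos hy

lemma ballotSum_succ_of_nonneg [Semiring R] (a b : R) (n : ℕ) {y : ℤ} (hy : 0 ≤ y) :
    ballotSum a b (n + 1) y = a * ballotSum a b n (y - 1) + b * ballotSum a b n (y + 1) :=
  if_pos hy

lemma commute_ballotSum [Semiring R] {a b c : R} (ha : Commute a c) (hb : Commute b c) (n : ℕ)
    (y : ℤ) : Commute (ballotSum a b n y) c := by
  induction n generalizing y with
  | zero =>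
    rw [ballotSum]
    split_ifs
    exacts [Commute.one_left c, Commute.zero_left c]
  | succ n ih =>
    rw [ballotSum]
    split_ifs
    exacts [(ha.mul_left (ih _)).add_left (hb.mul_left (ih _)), Commute.zero_left c]

lemma ballotNumber_zero_left (p q : ℕ) : ballotNumber 0 p q = 0 := by simp [ballotNumber]

lemma ballotNumber_zero_right (s p : ℕ) : ballotNumber (s + 1) p 0 = 1 := by
  simp [ballotNumber, Nat.choose_eq_zero_of_lt]

lemma ballotNumber_zero_succ (s q : ℕ) :
    ballotNumber (s + 1) 0 (q + 1) = ballotNumber s 0 q := by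
  simp only [ballotNumber, zero_add, add_lt_add_iff_right, Nat.choose_zero_right]
  split_ifs with h
  · rw [Nat.choose_eq_zero_of_lt h, Nat.choose_eq_zero_of_lt (Nat.succ_lt_succ h)]
  · rfl

lemma ballotNumber_succ_succ (s p q : ℕ) :
    ballotNumber (s + 1) (p + 1) (q + 1) =
      ballotNumber s (p + 1) q + ballotNumber (s + 2) p (q + 1) := by
  have hcond : q + 1 < p + 1 + (s + 1) ↔ q < p + 1 + s := by omega
  have hcond' : q + 1 < p + (s + 2) ↔ q < p + 1 + s := by omega
  simp only [ballotNumber, hcond, hcond']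
  split_ifs
  · rw [show p + 1 + (q + 1) = (p + q + 1) + 1 by ring,
      show p + 1 + (s + 1) = (p + s + 1) + 1 by ring,
      show p + 1 + q = p + q + 1 by ring, show p + (q + 1) = p + q + 1 by ring,
      show p + 1 + s = p + s + 1 by ring, show p + (s + 2) = p + s + 1 + 1 by ring,
      Nat.choose_succ_succ (p + q + 1) p, Nat.choose_succ_succ (p + q + 1) (p + s + 1)]
    push_cast
    ring
  · rfl

lemma sum_antidiagonal_succ_ballotNumber [AddCommGroup R] (s n : ℕ) (f : ℕ → ℕ → R) :
    ∑ x ∈ antidiagonal (n + 1), ballotNumber (s + 1) x.1 x.2 • f x.1 x.2 =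
      ∑ x ∈ antidiagonal n, ballotNumber s x.1 x.2 • f x.1 (x.2 + 1) +
        ∑ x ∈ antidiagonal n, ballotNumber (s + 2) x.1 x.2 • f (x.1 + 1) x.2 := by
  have hdown : ∑ x ∈ antidiagonal n, ballotNumber s x.1 x.2 • f x.1 (x.2 + 1) =
      ∑ x ∈ antidiagonal (n + 1),
        (if x.2 = 0 then 0 else ballotNumber s x.1 (x.2 - 1)) • f x.1 x.2 := by
    simp [Nat.sum_antidiagonal_succ']
  have hup : ∑ x ∈ antidiagonal n, ballotNumber (s + 2) x.1 x.2 • f (x.1 + 1) x.2 =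
      ∑ x ∈ antidiagonal (n + 1),
        (if x.1 = 0 then 0 else ballotNumber (s + 2) (x.1 - 1) x.2) • f x.1 x.2 := by
    simp [Nat.sum_antidiagonal_succ]
  rw [hdown, hup, ← sum_add_distrib]
  refine sum_congr rfl fun ⟨p, q⟩ hpq => ?_
  rw [← add_smul]
  congr 1
  rcases p with _ | p <;> rcases q with _ | q
  · simp at hpq
  · simp [ballotNumber_zero_succ]
  · simp [ballotNumber_zero_right]
  · simp [ballotNumber_succ_succ]

theorem ballotSum_eq_sum_antidiagonal [Ring R] {a b : R} (hab : Commute a b) (n s : ℕ) :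
    ballotSum a b n (s - 1) =
      ∑ x ∈ antidiagonal n, ballotNumber s x.1 x.2 • (b ^ x.1 * a ^ x.2) := by
  induction n generalizing s with
  | zero => cases s <;> simp [ballotSum, ballotNumber]
  | succ n ih =>
    cases s with
    | zero => rw [ballotSum_of_neg _ _ _ (by simp)]; simp [ballotNumber_zero_left]
    | succ s =>
      have hup := ih (s + 2)
      rw [show ((s + 2 : ℕ) : ℤ) - 1 = s + 1 by push_cast; ring] at hup
      rw [show ((s + 1 : ℕ) : ℤ) - 1 = s by push_cast; ring,
        ballotSum_succ_of_nonneg _ _ _ (Int.natCast_nonneg s), ih s, hup, mul_sum, mul_sum,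
        sum_antidiagonal_succ_ballotNumber s n fun p q => b ^ p * a ^ q]
      simp only [mul_smul_comm, ← mul_assoc, (hab.pow_right _).eq, pow_succ']

end BallotSum

section SurvivalProb

/-- The probability that a simple symmetric random walk on `ℤ` started at `x` makes `N` steps
without becoming negative. -/
noncomputable def survivalProb (N : ℕ) (x : ℤ) : ℝ := ballotSum (1 / 2) (1 / 2) N x

lemma survivalProb_zero_left {x : ℤ} (hx : 0 ≤ x) : survivalProb 0 x = 1 :=
  ballotSum_zero_of_nonneg _ _ hx

lemma survivalProb_of_neg (N : ℕ) {x : ℤ} (hx : x < 0) : survivalProb N x = 0 :=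
  ballotSum_of_neg _ _ N hx

lemma survivalProb_succ (N : ℕ) {x : ℤ} (hx : 0 ≤ x) :
    survivalProb (N + 1) x = (survivalProb N (x - 1) + survivalProb N (x + 1)) / 2 := by
  rw [survivalProb, ballotSum_succ_of_nonneg _ _ _ hx, survivalProb, survivalProb]
  ring

lemma survivalProb_zero_right (N : ℕ) : survivalProb N 0 = N.choose (N / 2) / 2 ^ N := by
  -- Truncating the index at `(N + 1) / 2` turns the truncated ballot numbers into differences.
  set g : ℕ → ℝ := fun p => N.choose (max p ((N + 1) / 2)) with hg
  have htel (p : ℕ) (hp : p ∈ range (N + 1)) :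
      ballotNumber 1 p (N - p) • ((1 / 2 : ℝ) ^ p * (1 / 2) ^ (N - p)) =
        (g p - g (p + 1)) / 2 ^ N := by
    have hpN : p + (N - p) = N := Nat.add_sub_of_le (mem_range_succ_iff.1 hp)
    rw [← pow_add, hpN, ballotNumber, hpN, zsmul_eq_mul, one_div, inv_pow, ← div_eq_mul_inv, hg]
    congr 1
    split_ifs with h
    · simp [max_eq_left (by omega : (N + 1) / 2 ≤ p), max_eq_left (by omega : (N + 1) / 2 ≤ p + 1)]
    · simp [max_eq_right (by omega : p ≤ (N + 1) / 2),
        max_eq_right (by omega : p + 1 ≤ (N + 1) / 2)]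
  have hsum := ballotSum_eq_sum_antidiagonal (Commute.refl (1 / 2 : ℝ)) N 1
  rw [Nat.cast_one, sub_self] at hsum
  rw [survivalProb, hsum, Nat.sum_antidiagonal_eq_sum_range_succ_mk, sum_congr rfl htel,
    ← sum_div, sum_range_sub']
  congr 1
  simp [hg, max_eq_left (by omega : (N + 1) / 2 ≤ N + 1),
    Nat.choose_symm_of_eq_add (by omega : N = (N + 1) / 2 + N / 2)]

lemma survivalProb_zero_right_nonneg (N : ℕ) : 0 ≤ survivalProb N 0 := by
  rw [survivalProb_zero_right]
  positivity

lemma survivalProb_zero_right_le_one (N : ℕ) : survivalProb N 0 ≤ 1 := by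
  rw [survivalProb_zero_right, div_le_one (by positivity)]
  exact_mod_cast Nat.choose_le_two_pow N _

lemma survivalProb_two_mul_sq_mul_wallis (k : ℕ) :
    survivalProb (2 * k) 0 ^ 2 * Real.Wallis.W k * (2 * k + 1) = 1 := by
  rw [survivalProb_zero_right, Nat.mul_div_cancel_left k two_pos,
    Real.Wallis.W_eq_factorial_ratio, Nat.cast_choose ℝ (by omega), show 2 * k - k = k by omega]
  field_simp
  ring

lemma survivalProb_two_mul_add_one (k : ℕ) :
    survivalProb (2 * k + 1) 0 = survivalProb (2 * k + 2) 0 := by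
  rw [survivalProb_zero_right, survivalProb_zero_right, show (2 * k + 1) / 2 = k by omega,
    show (2 * k + 2) / 2 = k + 1 by omega, Nat.choose_succ_succ (2 * k + 1) k,
    Nat.succ_eq_add_one, Nat.choose_symm_half k, pow_succ 2 (2 * k + 1)]
  push_cast
  field_simp
  ring

lemma one_le_survivalProb_two_mul_sq (k : ℕ) :
    1 ≤ survivalProb (2 * k) 0 ^ 2 * (Real.pi / 2) * (2 * k + 1) := by
  refine (survivalProb_two_mul_sq_mul_wallis k).ge.trans ?_
  gcongr
  exact Real.Wallis.W_le k

lemma survivalProb_two_mul_sq_le (k : ℕ) :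
    survivalProb (2 * k) 0 ^ 2 * (Real.pi / 2) * (2 * k + 1) ^ 2 ≤ 2 * k + 2 := by
  have hW := Real.Wallis.le_W k
  rw [div_mul_eq_mul_div, div_le_iff₀ (by positivity)] at hW
  calc survivalProb (2 * k) 0 ^ 2 * (Real.pi / 2) * (2 * k + 1) ^ 2
      = survivalProb (2 * k) 0 ^ 2 * (2 * k + 1) * ((2 * k + 1) * (Real.pi / 2)) := by ring
    _ ≤ survivalProb (2 * k) 0 ^ 2 * (2 * k + 1) * (Real.Wallis.W k * (2 * k + 2)) := by gcongr
    _ = survivalProb (2 * k) 0 ^ 2 * Real.Wallis.W k * (2 * k + 1) * (2 * k + 2) := by ring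
    _ = 2 * k + 2 := by rw [survivalProb_two_mul_sq_mul_wallis, one_mul]

lemma survivalProb_sq_mul_le_one (N : ℕ) : survivalProb N 0 ^ 2 * (Real.pi / 2 * N) ≤ 1 := by
  rcases Nat.even_or_odd' N with ⟨k, rfl | rfl⟩
  · have h := survivalProb_two_mul_sq_le k
    push_cast
    nlinarith [sq_nonneg (survivalProb (2 * k) 0), Real.pi_pos]
  · have h := survivalProb_two_mul_sq_le (k + 1)
    rw [survivalProb_two_mul_add_one]
    push_cast [mul_add] at h ⊢
    nlinarith [sq_nonneg (survivalProb (2 * k + 2) 0), Real.pi_pos]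

lemma one_le_survivalProb_sq_mul (N : ℕ) :
    1 ≤ survivalProb N 0 ^ 2 * (Real.pi / 2 * (N + 2)) := by
  rw [← mul_assoc]
  rcases Nat.even_or_odd' N with ⟨k, rfl | rfl⟩
  · refine (one_le_survivalProb_two_mul_sq k).trans ?_
    push_cast
    gcongr
    exact one_le_two
  · have h := one_le_survivalProb_two_mul_sq (k + 1)
    rw [survivalProb_two_mul_add_one]
    push_cast [mul_add] at h ⊢
    linarith

lemma survivalProb_mul_sqrt_le_one (N : ℕ) : survivalProb N 0 * √(Real.pi / 2 * N) ≤ 1 := by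
  refine (pow_le_one_iff_of_nonneg ?_ two_ne_zero).1 ?_
  · exact mul_nonneg (survivalProb_zero_right_nonneg N) (Real.sqrt_nonneg _)
  · rw [mul_pow, Real.sq_sqrt (by positivity)]
    exact survivalProb_sq_mul_le_one N

lemma one_sub_le_survivalProb_mul_sqrt {N : ℕ} (hN : N ≠ 0) :
    1 - 2 / N ≤ survivalProb N 0 * √(Real.pi / 2 * N) := by
  have hle := survivalProb_mul_sqrt_le_one N
  set y := survivalProb N 0 * √(Real.pi / 2 * N) with hy
  have hy0 : 0 ≤ y := mul_nonneg (survivalProb_zero_right_nonneg N) (Real.sqrt_nonneg _)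
  have hsq : y ^ 2 = survivalProb N 0 ^ 2 * (Real.pi / 2 * N) := by
    rw [hy, mul_pow, Real.sq_sqrt (by positivity)]
  have hlow : 1 ≤ y ^ 2 * (1 + 2 / N) := by
    refine (one_le_survivalProb_sq_mul N).trans_eq ?_
    rw [hsq]
    field_simp
  have : 0 < 2 / (N : ℝ) := by positivity
  have hlow' : 1 ≤ y * (1 + 2 / N) :=
    hlow.trans (mul_le_mul_of_nonneg_right (pow_le_of_le_one hy0 hle two_ne_zero) (by positivity))
  nlinarith

end SurvivalProb

section Binomial

lemma choose_succ_mul_add_of_two_mul_eq {n k p : ℕ} (h : 2 * p = n + k) :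
    ((n.choose p : ℝ) - n.choose (p + 1)) * (n + k + 2) = 2 * (k + 1) * n.choose p := by
  rcases le_or_gt p n with hp | hp
  · have hsucc : (n.choose (p + 1) : ℝ) * (p + 1) = n.choose p * (n - p) := by
      rw [← Nat.cast_sub hp]
      exact_mod_cast Nat.choose_succ_right_eq n p
    have h' : (2 : ℝ) * p = n + k := by exact_mod_cast h
    linear_combination (-2) * hsucc - (n.choose (p + 1) + n.choose p : ℝ) * (-h')
  · simp [Nat.choose_eq_zero_of_lt hp, Nat.choose_eq_zero_of_lt (Nat.lt_succ_of_lt hp)]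

lemma middle_choose_mul_le_choose {n k p : ℕ} (hn : 0 < n) (h : 2 * p = n + k) :
    (n.choose (n / 2) : ℝ) * (1 - k ^ 2 / (2 * n)) ≤ n.choose p := by
  induction p generalizing k with
  | zero => omega
  | succ p ih =>
    rcases lt_or_ge k 2 with hk | hk
    · rw [Nat.choose_symm_of_eq_add (by omega : n = n / 2 + (p + 1))]
      exact mul_le_of_le_one_right (Nat.cast_nonneg _) (sub_le_self _ (by positivity))
    obtain ⟨j, rfl⟩ := Nat.exists_eq_add_of_le' hk
    have hj : 2 * p = n + j := by omega
    have hdrop : (n.choose p : ℝ) - n.choose (p + 1) ≤ n.choose (n / 2) * ((2 * j + 2) / n) := by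
      rw [eq_div_of_mul_eq (by positivity) (choose_succ_mul_add_of_two_mul_eq hj), mul_comm]
      have hmid : (n.choose p : ℝ) ≤ n.choose (n / 2) := by exact_mod_cast Nat.choose_le_middle p n
      rw [mul_div_assoc, mul_add_one (2 : ℝ)]
      gcongr
      linarith
    calc (n.choose (n / 2) : ℝ) * (1 - ((j + 2 : ℕ) : ℝ) ^ 2 / (2 * n))
        = n.choose (n / 2) * (1 - j ^ 2 / (2 * n)) - n.choose (n / 2) * ((2 * j + 2) / n) := by
          push_cast
          ring
      _ ≤ (n.choose p : ℝ) - (n.choose p - n.choose (p + 1)) := sub_le_sub (ih hj) hdrop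
      _ = (n.choose (p + 1) : ℝ) := sub_sub_cancel _ _

lemma choose_div_two_pow_mul_sqrt_le_one (n p : ℕ) :
    n.choose p / 2 ^ n * √(Real.pi / 2 * n) ≤ 1 := by
  refine le_trans ?_ (survivalProb_mul_sqrt_le_one n)
  rw [survivalProb_zero_right]
  gcongr
  exact Nat.choose_le_middle p n

lemma one_sub_le_choose_div_two_pow_mul_sqrt {n k p : ℕ} (hn : 0 < n) (h : 2 * p = n + k) :
    1 - (k ^ 2 + 2) / n ≤ n.choose p / 2 ^ n * √(Real.pi / 2 * n) := by
  have hmid := one_sub_le_survivalProb_mul_sqrt hn.ne'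
  have hle := survivalProb_mul_sqrt_le_one n
  set y := survivalProb n 0 * √(Real.pi / 2 * n) with hy
  have hk : 0 ≤ (k : ℝ) ^ 2 / (2 * n) := by positivity
  calc 1 - ((k : ℝ) ^ 2 + 2) / n = 1 - 2 / n - 2 * (k ^ 2 / (2 * n)) := by field_simp; ring
    _ ≤ y - y * (k ^ 2 / (2 * n)) := by nlinarith
    _ = n.choose (n / 2) * (1 - k ^ 2 / (2 * n)) / 2 ^ n * √(Real.pi / 2 * n) := by
      rw [hy, survivalProb_zero_right]; ring
    _ ≤ n.choose p / 2 ^ n * √(Real.pi / 2 * n) := by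
      gcongr
      exact middle_choose_mul_le_choose hn h

end Binomial

section ProductExpansion

variable {ι : Type*}

lemma exists_abs_prod_sub_one_sub_sum_le (J : Finset ι) {M : ℝ} (hM : 0 ≤ M) :
    ∃ C : ℝ, 0 ≤ C ∧ ∀ a l ε : ι → ℝ,
      (∀ j ∈ J, |a j| ≤ M ∧ |a j - 1 - l j| ≤ ε j ∧ l j ^ 2 ≤ ε j) →
        |∏ j ∈ J, a j - 1 - ∑ j ∈ J, l j| ≤ C * ∑ j ∈ J, ε j := by
  classical
  induction J using Finset.induction_on with
  | empty => exact ⟨0, le_rfl, by simp⟩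
  | insert i J hi ih =>
    obtain ⟨C, hC, hexp⟩ := ih
    refine ⟨M * C + 1 + J.card * (2 * M + 3) + 1, by positivity, fun a l ε h => ?_⟩
    have hJ := hexp a l ε fun j hj => h j (mem_insert_of_mem hj)
    obtain ⟨haM, har, hal⟩ := h i (mem_insert_self _ _)
    have hε (j) (hj : j ∈ J) : l j ^ 2 ≤ ε j := (h j (mem_insert_of_mem hj)).2.2
    have hE : 0 ≤ ∑ j ∈ J, ε j := sum_nonneg fun j hj => (sq_nonneg _).trans (hε j hj)
    have hεi : 0 ≤ ε i := (sq_nonneg _).trans hal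
    have hsq : (a i - 1) ^ 2 ≤ (2 * M + 3) * ε i := by
      obtain ⟨h1, h2⟩ := abs_le.1 haM
      obtain ⟨h3, h4⟩ := abs_le.1 har
      nlinarith [sq_nonneg (a i - 1 - l i)]
    have hcross : |∑ j ∈ J, (a i - 1) * l j| ≤ J.card * ((2 * M + 3) * ε i) + ∑ j ∈ J, ε j := by
      rw [← nsmul_eq_mul, ← sum_const, ← sum_add_distrib]
      refine (abs_sum_le_sum_abs _ _).trans (sum_le_sum fun j hj => ?_)
      rw [abs_mul]
      nlinarith [sq_nonneg (|a i - 1| - |l j|), sq_abs (a i - 1), sq_abs (l j), hε j hj]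
    have hmul : |a i * (∏ j ∈ J, a j - 1 - ∑ j ∈ J, l j)| ≤ M * (C * ∑ j ∈ J, ε j) := by
      rw [abs_mul]; gcongr
    rw [prod_insert hi, sum_insert hi, sum_insert hi]
    calc |a i * ∏ j ∈ J, a j - 1 - (l i + ∑ j ∈ J, l j)|
        = |a i * (∏ j ∈ J, a j - 1 - ∑ j ∈ J, l j) + (a i - 1 - l i) +
            ∑ j ∈ J, (a i - 1) * l j| := by rw [← mul_sum]; ring_nf
      _ ≤ M * (C * ∑ j ∈ J, ε j) + ε i + (J.card * ((2 * M + 3) * ε i) + ∑ j ∈ J, ε j) :=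
        (abs_add_three _ _ _).trans (by gcongr)
      _ ≤ (M * C + 1 + J.card * (2 * M + 3) + 1) * (ε i + ∑ j ∈ J, ε j) := by
        have : 0 ≤ (M * C + 1) * ε i := by positivity
        have : 0 ≤ (J.card * (2 * M + 3) + 1) * ∑ j ∈ J, ε j := by positivity
        linarith

lemma abs_inv_sqrt_sub_one_sub_le {x : ℝ} (hx : 1 / 2 ≤ x) :
    |(√x)⁻¹ - 1 - (1 - x) / 2| ≤ (x - 1) ^ 2 := by
  have hσ : 0 < √x := Real.sqrt_pos.2 (by linarith)
  have hσ2 : √x ^ 2 = x := Real.sq_sqrt (by linarith)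
  have hfactor : (√x)⁻¹ - 1 - (1 - x) / 2 = (√x - 1) ^ 2 * ((√x + 2) / (2 * √x)) := by
    rw [← hσ2, Real.sqrt_sq hσ.le]
    field_simp
    ring
  rw [hfactor, abs_of_nonneg (by positivity),
    show (x - 1) ^ 2 = (√x - 1) ^ 2 * (√x + 1) ^ 2 by rw [← hσ2, Real.sqrt_sq hσ.le]; ring]
  gcongr
  rw [div_le_iff₀ (by positivity)]
  nlinarith [pow_pos hσ 3]

lemma survivalProb_mul_sqrt_eq {N : ℕ} {T : ℝ} (hT : 0 < T) (hN : 0 < N) :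
    survivalProb N 0 * √(Real.pi / 2 * T) =
      survivalProb N 0 * √(Real.pi / 2 * N) * (√(N / T))⁻¹ := by
  have hx : √(N / T) ≠ 0 := (Real.sqrt_pos.2 (by positivity)).ne'
  rw [eq_mul_inv_iff_mul_eq₀ hx, mul_assoc, ← Real.sqrt_mul (by positivity)]
  congr 2
  field_simp

lemma abs_survivalProb_mul_sqrt_le_two {N : ℕ} {T : ℝ} (hN : T ≤ 2 * N) :
    |survivalProb N 0 * √(Real.pi / 2 * T)| ≤ 2 := by
  rw [abs_of_nonneg (mul_nonneg (survivalProb_zero_right_nonneg N) (Real.sqrt_nonneg _))]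
  calc survivalProb N 0 * √(Real.pi / 2 * T)
      ≤ survivalProb N 0 * √(2 ^ 2 * (Real.pi / 2 * N)) := by
        refine mul_le_mul_of_nonneg_left (Real.sqrt_le_sqrt ?_) (survivalProb_zero_right_nonneg N)
        linarith [mul_le_mul_of_nonneg_left hN (half_pos Real.pi_pos).le,
          mul_nonneg (half_pos Real.pi_pos).le N.cast_nonneg]
    _ = 2 * (survivalProb N 0 * √(Real.pi / 2 * N)) := by
        rw [Real.sqrt_mul (by positivity), Real.sqrt_sq zero_le_two]; ring
    _ ≤ 2 := by linarith [survivalProb_mul_sqrt_le_one N]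

lemma abs_survivalProb_mul_sqrt_sub_le {N : ℕ} {T : ℝ} (hT : 0 < T) (hN : T ≤ 2 * N) :
    |survivalProb N 0 * √(Real.pi / 2 * T) - 1 - (1 - N / T) / 2| ≤
      8 / T + (N / T - 1) ^ 2 := by
  have hN0 : 0 < N := by exact_mod_cast (by linarith : (0 : ℝ) < N)
  have hx : 1 / 2 ≤ N / T := by rw [le_div_iff₀ hT]; linarith
  have hs : (√(N / T))⁻¹ ≤ 2 := by
    rw [inv_le_comm₀ (Real.sqrt_pos.2 (by linarith)) two_pos]
    exact Real.le_sqrt_of_sq_le (by linarith)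
  have hy : |survivalProb N 0 * √(Real.pi / 2 * N) - 1| ≤ 4 / T := by
    have hlow := one_sub_le_survivalProb_mul_sqrt hN0.ne'
    have hup := survivalProb_mul_sqrt_le_one N
    have hNT : 2 / (N : ℝ) ≤ 4 / T := by
      rw [div_le_div_iff₀ (by exact_mod_cast hN0) hT]; linarith
    rw [abs_le]
    constructor <;> linarith [div_pos four_pos hT]
  rw [survivalProb_mul_sqrt_eq hT hN0]
  calc _ = |(survivalProb N 0 * √(Real.pi / 2 * N) - 1) * (√(N / T))⁻¹ +
          ((√(N / T))⁻¹ - 1 - (1 - N / T) / 2)| := by ring_nf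
    _ ≤ 4 / T * 2 + (N / T - 1) ^ 2 := by
        refine (abs_add_le _ _).trans (add_le_add ?_ (abs_inv_sqrt_sub_one_sub_le hx))
        rw [abs_mul, abs_of_nonneg (by positivity : 0 ≤ (√(N / T))⁻¹)]
        gcongr
    _ = 8 / T + (N / T - 1) ^ 2 := by ring

lemma abs_prod_survivalProb_sub_le (J : Finset ι) {T : ι → ℝ} {N : ι → ℕ} :
    |∏ j ∈ J, (survivalProb (N j) 0 * √(Real.pi / 2 * T j)) - 1 - ∑ j ∈ J, (1 - N j / T j) / 2| ≤
      ∏ j ∈ J, √(Real.pi / 2 * T j) + 1 + J.card + ∑ j ∈ J, (N j / T j - 1) ^ 2 := by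
  have hprod : |∏ j ∈ J, (survivalProb (N j) 0 * √(Real.pi / 2 * T j))| ≤
      ∏ j ∈ J, √(Real.pi / 2 * T j) := by
    rw [abs_prod]
    refine prod_le_prod (fun _ _ => abs_nonneg _) fun j _ => ?_
    rw [abs_of_nonneg (mul_nonneg (survivalProb_zero_right_nonneg _) (Real.sqrt_nonneg _))]
    exact mul_le_of_le_one_left (Real.sqrt_nonneg _) (survivalProb_zero_right_le_one _)
  have hsum : |∑ j ∈ J, (1 - N j / T j) / 2| ≤ J.card + ∑ j ∈ J, (N j / T j - 1) ^ 2 := by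
    rw [← nsmul_one, ← sum_const, ← sum_add_distrib]
    refine (abs_sum_le_sum_abs _ _).trans (sum_le_sum fun j _ => abs_le.2 ⟨?_, ?_⟩) <;>
      nlinarith [sq_nonneg (N j / T j - 1)]
  calc _ ≤ |∏ j ∈ J, (survivalProb (N j) 0 * √(Real.pi / 2 * T j))| + |(1 : ℝ)| +
        |∑ j ∈ J, (1 - N j / T j) / 2| :=
        (abs_sub _ _).trans (add_le_add_left (abs_sub _ _) _)
    _ ≤ _ := by rw [abs_one]; linarith

-- The exponential term dominates where some `N j` is below `T j / 2` and the expansion breaks down.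
lemma exists_abs_prod_survivalProb_sub_le (J : Finset ι) :
    ∃ C : ℝ, 0 ≤ C ∧ ∀ (T : ι → ℝ) (N : ι → ℕ), (∀ j ∈ J, 0 < T j) →
      |∏ j ∈ J, (survivalProb (N j) 0 * √(Real.pi / 2 * T j)) - 1
          - ∑ j ∈ J, (1 - N j / T j) / 2| ≤
        C * ∑ j ∈ J, (1 / T j + (N j / T j - 1) ^ 2 +
          (∏ i ∈ J, √(Real.pi / 2 * T i) + 1) * Real.exp ((T j - 2 * N j) / 8)) := by
  obtain ⟨C, hC, hexp⟩ := exists_abs_prod_sub_one_sub_sum_le J zero_le_two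
  refine ⟨8 * C + J.card + 2, by positivity, fun T N hT => ?_⟩
  set P := ∏ i ∈ J, √(Real.pi / 2 * T i)
  have hP : 0 ≤ P := prod_nonneg fun _ _ => Real.sqrt_nonneg _
  set e : ι → ℝ := fun j =>
    1 / T j + (N j / T j - 1) ^ 2 + (P + 1) * Real.exp ((T j - 2 * N j) / 8)
  have hT' (j) (hj : j ∈ J) : 0 < 1 / T j := one_div_pos.2 (hT j hj)
  have hexp0 (j) : 0 ≤ (P + 1) * Real.exp ((T j - 2 * N j) / 8) := by positivity
  have hsq (j) (hj : j ∈ J) : (N j / T j - 1) ^ 2 ≤ e j := by linarith [hT' j hj, hexp0 j]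
  have he0 : 0 ≤ ∑ j ∈ J, e j := sum_nonneg fun j hj => (sq_nonneg _).trans (hsq j hj)
  by_cases hN : ∀ j ∈ J, T j ≤ 2 * N j
  · have hle (j) : 8 / T j + (N j / T j - 1) ^ 2 ≤ 8 * e j := by
      linarith [hexp0 j, sq_nonneg (N j / T j - 1), mul_one_div 8 (T j)]
    have hgood := hexp (fun j => survivalProb (N j) 0 * √(Real.pi / 2 * T j))
      (fun j => (1 - N j / T j) / 2) (fun j => 8 * e j) fun j hj =>
        ⟨abs_survivalProb_mul_sqrt_le_two (hN j hj),
          (abs_survivalProb_mul_sqrt_sub_le (hT j hj) (hN j hj)).trans (hle j), by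
            nlinarith [hsq j hj, (sq_nonneg _).trans (hsq j hj)]⟩
    rw [← mul_sum] at hgood
    nlinarith [J.card.cast_nonneg (α := ℝ)]
  · push Not at hN
    obtain ⟨i, hi, hlt⟩ := hN
    have hbig : P + 1 ≤ ∑ j ∈ J, e j := by
      refine le_trans ?_ (single_le_sum (fun j hj => (sq_nonneg _).trans (hsq j hj)) hi)
      have hone : 1 ≤ Real.exp ((T i - 2 * N i) / 8) := Real.one_le_exp (by linarith)
      nlinarith [hT' i hi, sq_nonneg (N i / T i - 1)]
    have hcard : (J.card : ℝ) ≤ J.card * ∑ j ∈ J, e j :=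
      le_mul_of_one_le_right (Nat.cast_nonneg _) (by linarith)
    refine (abs_prod_survivalProb_sub_le J).trans ?_
    nlinarith [sum_le_sum hsq]

end ProductExpansion

section TranslationSum

variable {α M : Type*} [AddCommMonoid M]

/-- The operator `f ↦ (N ↦ ∑ i ∈ s, v i * f (N + φ i))` on real functions. If the weights `v` sum
to one, it is the transition operator of the walk on `M` with random step `φ i`. -/
def translationSum (s : Finset α) (v : α → ℝ) (φ : α → M) : Module.End ℝ (M → ℝ) where
  toFun f N := ∑ i ∈ s, v i * f (N + φ i)
  map_add' f g := by ext N; simp [mul_add, sum_add_distrib]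
  map_smul' c f := by ext N; simp [mul_sum, mul_left_comm]

variable {s : Finset α} {v : α → ℝ} {φ : α → M}

lemma translationSum_apply (s : Finset α) (v : α → ℝ) (φ : α → M) (f : M → ℝ) (N : M) :
    translationSum s v φ f N = ∑ i ∈ s, v i * f (N + φ i) := rfl

lemma commute_translationSum (s t : Finset α) (u v : α → ℝ) (φ : α → M) :
    Commute (translationSum s u φ) (translationSum t v φ) := by
  ext f N
  simp only [Module.End.mul_apply, translationSum_apply, mul_sum]
  rw [sum_comm]
  refine sum_congr rfl fun i _ => sum_congr rfl fun j _ => ?_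
  rw [add_right_comm, mul_left_comm]

lemma translationSum_smul (s : Finset α) (c : ℝ) (v : α → ℝ) (φ : α → M) :
    translationSum s (c • v) φ = c • translationSum s v φ := by
  ext f N
  simp [translationSum_apply, mul_sum, mul_assoc]

lemma monotone_translationSum_pow (hv : ∀ i ∈ s, 0 ≤ v i) (p : ℕ) :
    Monotone (translationSum s v φ ^ p : Module.End ℝ (M → ℝ)) := by
  induction p with
  | zero => exact monotone_id
  | succ p ih =>
    intro f g hfg N
    rw [pow_succ', Module.End.mul_apply, Module.End.mul_apply]
    exact sum_le_sum fun i hi => mul_le_mul_of_nonneg_left (ih hfg _) (hv i hi)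

lemma translationSum_pow_add_const (hv : ∑ i ∈ s, v i = 1) (g : M →+ ℝ) (c : ℝ) (p : ℕ) :
    (translationSum s v φ ^ p) (fun N => g N + c) =
      fun N => g N + (c + p * ∑ i ∈ s, v i * g (φ i)) := by
  induction p with
  | zero => simp
  | succ p ih =>
    ext N
    rw [pow_succ', Module.End.mul_apply, ih, translationSum_apply]
    simp only [map_add, add_assoc, mul_add, sum_add_distrib, ← sum_mul, hv]
    push_cast
    ring

lemma translationSum_pow_sq_add_const (hv : ∑ i ∈ s, v i = 1) (g : M →+ ℝ) (c e : ℝ) (p : ℕ) :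
    (translationSum s v φ ^ p) (fun N => (g N + c) ^ 2 + e) =
      fun N => (g N + (c + p * ∑ i ∈ s, v i * g (φ i))) ^ 2 +
        (e + p * (∑ i ∈ s, v i * g (φ i) ^ 2 - (∑ i ∈ s, v i * g (φ i)) ^ 2)) := by
  induction p with
  | zero => simp
  | succ p ih =>
    ext N
    rw [pow_succ', Module.End.mul_apply, ih, translationSum_apply]
    set μ := ∑ i ∈ s, v i * g (φ i)
    set b := g N + (c + p * μ)
    set e' := e + p * (∑ i ∈ s, v i * g (φ i) ^ 2 - μ ^ 2)
    calc ∑ i ∈ s, v i * ((g (N + φ i) + (c + p * μ)) ^ 2 + e')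
        = ∑ i ∈ s, (v i * (b ^ 2 + e') + v i * g (φ i) * (2 * b) + v i * g (φ i) ^ 2) :=
          sum_congr rfl fun i _ => by rw [map_add]; ring
      _ = b ^ 2 + e' + μ * (2 * b) + ∑ i ∈ s, v i * g (φ i) ^ 2 := by
          rw [sum_add_distrib, sum_add_distrib, ← sum_mul, ← sum_mul, hv, one_mul]
      _ = _ := by push_cast; ring

lemma translationSum_pow_exp (s : Finset α) (v : α → ℝ) (φ : α → M) (g : M →+ ℝ) (p : ℕ) :
    (translationSum s v φ ^ p) (fun N => Real.exp (g N)) =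
      fun N => (∑ i ∈ s, v i * Real.exp (g (φ i))) ^ p * Real.exp (g N) := by
  induction p with
  | zero => simp
  | succ p ih =>
    ext N
    rw [pow_succ', Module.End.mul_apply, ih, translationSum_apply, pow_succ', sum_mul, sum_mul]
    exact sum_congr rfl fun i _ => by rw [map_add, Real.exp_add]; ring

end TranslationSum

/-- A mean on a set `X`: a positive linear functional on the real functions on `X` that takes the
value `1` at the constant function `1`. Expectations are used in this form, so that no
measurability or integrability arises. -/
structure IsMean {X : Type*} (E : (X → ℝ) →ₗ[ℝ] ℝ) : Prop where
  monotone : Monotone E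
  map_one : E 1 = 1

section Mean

variable {X ι : Type*}

lemma IsMean.abs_map_le {E : (X → ℝ) →ₗ[ℝ] ℝ} (hE : IsMean E) {f g : X → ℝ}
    (h : ∀ x, |f x| ≤ g x) : |E f| ≤ E g := by
  rw [abs_le, ← map_neg]
  exact ⟨hE.monotone fun x => (abs_le.1 (h x)).1, hE.monotone fun x => (abs_le.1 (h x)).2⟩

lemma IsMean.abs_prod_survivalProb_le_one {E : ((ι → ℕ) → ℝ) →ₗ[ℝ] ℝ} (hE : IsMean E)
    (J : Finset ι) : |E fun N => ∏ j ∈ J, survivalProb (N j) 0| ≤ 1 := by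
  rw [← hE.map_one]
  refine hE.abs_map_le fun N => ?_
  rw [abs_of_nonneg (prod_nonneg fun j _ => survivalProb_zero_right_nonneg _)]
  exact prod_le_one (fun j _ => survivalProb_zero_right_nonneg _)
    fun j _ => survivalProb_zero_right_le_one _

lemma exists_abs_prod_survivalProb_add_sum_le (J : Finset ι) :
    ∃ C : ℝ, 0 ≤ C ∧ ∀ (T : ι → ℝ) (N : ι → ℕ), (∀ j ∈ J, 0 < T j) →
      |(∏ j ∈ J, √(Real.pi / 2 * T j)) * ∏ j ∈ J, survivalProb (N j) 0 - 1
          + ∑ j ∈ J, 1 / (2 * T j) * (N j - T j)| ≤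
        C * ∑ j ∈ J, (1 / T j + 1 / T j ^ 2 * (N j - T j) ^ 2 +
          (∏ i ∈ J, √(Real.pi / 2 * T i) + 1) * Real.exp (T j / 8) * Real.exp (-(N j / 4))) := by
  obtain ⟨C, hC, hpt⟩ := exists_abs_prod_survivalProb_sub_le J
  refine ⟨C, hC, fun T N hT => ?_⟩
  have hlin : ∑ j ∈ J, 1 / (2 * T j) * (N j - T j) = -∑ j ∈ J, (1 - N j / T j) / 2 := by
    rw [← sum_neg_distrib]
    refine sum_congr rfl fun j hj => ?_
    have := (hT j hj).ne'
    field_simp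
    ring
  rw [hlin, ← sub_eq_add_neg, mul_comm, ← prod_mul_distrib]
  refine (hpt T N hT).trans_eq ?_
  congr 1
  refine sum_congr rfl fun j hj => ?_
  have := (hT j hj).ne'
  rw [mul_assoc _ (Real.exp _), ← Real.exp_add,
    show N j / T j - 1 = (N j - T j) / T j by field_simp]
  ring_nf

theorem exists_abs_mean_prod_survivalProb_le (J : Finset ι) :
    ∃ C : ℝ, 0 ≤ C ∧ ∀ (E : ((ι → ℕ) → ℝ) →ₗ[ℝ] ℝ) (T : ι → ℝ), IsMean E → (∀ j ∈ J, 0 < T j) →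
      |(∏ j ∈ J, √(Real.pi / 2 * T j)) * (E fun N => ∏ j ∈ J, survivalProb (N j) 0) - 1| ≤
        C * ∑ j ∈ J, (1 / T j + 1 / T j ^ 2 * (E fun N => (N j - T j) ^ 2) +
          (∏ i ∈ J, √(Real.pi / 2 * T i) + 1) * Real.exp (T j / 8) *
            (E fun N => Real.exp (-(N j / 4)))) +
          ∑ j ∈ J, 1 / (2 * T j) * |E fun N => N j - T j| := by
  obtain ⟨C, hC, hpt⟩ := exists_abs_prod_survivalProb_add_sum_le J
  refine ⟨C, hC, fun E T hE hT => ?_⟩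
  set P := ∏ i ∈ J, √(Real.pi / 2 * T i)
  set F : (ι → ℕ) → ℝ := fun N => ∏ j ∈ J, survivalProb (N j) 0
  set L : ι → (ι → ℕ) → ℝ := fun j N => N j - T j
  set V : ι → (ι → ℕ) → ℝ := fun j N => (N j - T j) ^ 2
  set G : ι → (ι → ℕ) → ℝ := fun j N => Real.exp (-(N j / 4))
  have hmean : |E (P • F - 1 + ∑ j ∈ J, (1 / (2 * T j)) • L j)| ≤
      E (C • ∑ j ∈ J, ((1 / T j) • 1 + (1 / T j ^ 2) • V j +
        ((P + 1) * Real.exp (T j / 8)) • G j)) :=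
    hE.abs_map_le fun N => by simpa using hpt T N hT
  simp only [map_add, map_sub, map_sum, map_smul, hE.map_one, smul_eq_mul, mul_one] at hmean
  have hlin : |∑ j ∈ J, 1 / (2 * T j) * E (L j)| ≤ ∑ j ∈ J, 1 / (2 * T j) * |E (L j)| := by
    refine (abs_sum_le_sum_abs _ _).trans_eq (sum_congr rfl fun j hj => ?_)
    rw [abs_mul, abs_of_pos (one_div_pos.2 (mul_pos two_pos (hT j hj)))]
  rw [abs_le] at hmean hlin ⊢
  constructor <;> linarith [hmean.1, hmean.2, hlin.1, hlin.2]

end Mean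

/-- `v` is a probability weight on the finite set `s`: the distribution of a random step. -/
structure IsProbWeight {α : Type*} (s : Finset α) (v : α → ℝ) : Prop where
  nonneg : ∀ i ∈ s, 0 ≤ v i
  sum_eq_one : ∑ i ∈ s, v i = 1

section TranslationSum

variable {α M : Type*} [AddCommMonoid M] {s t : Finset α} {u v : α → ℝ} {φ : α → M}

lemma isMean_translationSum_pow_mul_pow (hu : IsProbWeight s u) (hv : IsProbWeight t v) (p q : ℕ) :
    IsMean (LinearMap.proj 0 ∘ₗ (translationSum s u φ ^ p * translationSum t v φ ^ q)) where
  monotone _ _ h :=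
    monotone_translationSum_pow hu.nonneg p (monotone_translationSum_pow hv.nonneg q h) 0
  map_one := by
    have h := translationSum_pow_add_const (φ := φ) hu.sum_eq_one 0 1 p
    have h' := translationSum_pow_add_const (φ := φ) hv.sum_eq_one 0 1 q
    simp only [AddMonoidHom.zero_apply, zero_add, mul_zero, sum_const_zero, add_zero] at h h'
    simp [Pi.one_def, h, h']

lemma translationSum_pow_mul_pow_sub_const (hu : IsProbWeight s u) (hv : IsProbWeight t v)
    (g : M →+ ℝ) (c : ℝ) (p q : ℕ) :
    (translationSum s u φ ^ p * translationSum t v φ ^ q) (fun N => g N - c) 0 =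
      p * ∑ i ∈ s, u i * g (φ i) + q * ∑ i ∈ t, v i * g (φ i) - c := by
  simp only [sub_eq_add_neg, Module.End.mul_apply, translationSum_pow_add_const hv.sum_eq_one,
    translationSum_pow_add_const hu.sum_eq_one, map_zero]
  ring

lemma translationSum_pow_mul_pow_sq_sub_const_le (hu : IsProbWeight s u) (hv : IsProbWeight t v)
    {g : M →+ ℝ} (hs : ∀ i ∈ s, g (φ i) ∈ Set.Icc 0 1) (ht : ∀ i ∈ t, g (φ i) ∈ Set.Icc 0 1)
    (c : ℝ) (p q : ℕ) :
    (translationSum s u φ ^ p * translationSum t v φ ^ q) (fun N => (g N - c) ^ 2) 0 ≤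
      (p * ∑ i ∈ s, u i * g (φ i) + q * ∑ i ∈ t, v i * g (φ i) - c) ^ 2 + (p + q) := by
  have hvar {r : Finset α} {w : α → ℝ} (hw : IsProbWeight r w)
      (hr : ∀ i ∈ r, g (φ i) ∈ Set.Icc 0 1) :
      ∑ i ∈ r, w i * g (φ i) ^ 2 - (∑ i ∈ r, w i * g (φ i)) ^ 2 ≤ 1 := by
    have : ∑ i ∈ r, w i * g (φ i) ^ 2 ≤ 1 := hw.sum_eq_one ▸ sum_le_sum fun i hi =>
      mul_le_of_le_one_right (hw.nonneg i hi) (pow_le_one₀ (hr i hi).1 (hr i hi).2)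
    linarith [sq_nonneg (∑ i ∈ r, w i * g (φ i))]
  have hD := translationSum_pow_sq_add_const (φ := φ) hv.sum_eq_one g (-c) 0 q
  simp only [add_zero] at hD
  simp only [sub_eq_add_neg, Module.End.mul_apply, hD,
    translationSum_pow_sq_add_const hu.sum_eq_one, map_zero]
  have hp := mul_le_of_le_one_right p.cast_nonneg (hvar hu hs)
  have hq := mul_le_of_le_one_right q.cast_nonneg (hvar hv ht)
  linarith

lemma sum_mul_exp_neg_div_four_le (hv : IsProbWeight s v) {g : α → ℝ}
    (hg : ∀ i ∈ s, g i ∈ Set.Icc 0 1) :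
    ∑ i ∈ s, v i * Real.exp (-(g i / 4)) ≤ Real.exp (-((∑ i ∈ s, v i * g i) / 5)) := by
  have hexp {x : ℝ} (hx : x ∈ Set.Icc 0 1) : Real.exp (-(x / 4)) ≤ 1 - x / 5 := by
    obtain ⟨h0, h1⟩ := hx
    rw [Real.exp_neg, inv_le_comm₀ (Real.exp_pos _) (by linarith)]
    refine le_trans ?_ (Real.add_one_le_exp (x / 4))
    rw [inv_le_iff_one_le_mul₀ (by linarith)]
    nlinarith
  calc ∑ i ∈ s, v i * Real.exp (-(g i / 4)) ≤ ∑ i ∈ s, v i * (1 - g i / 5) :=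
        sum_le_sum fun i hi => mul_le_mul_of_nonneg_left (hexp (hg i hi)) (hv.nonneg i hi)
    _ = -((∑ i ∈ s, v i * g i) / 5) + 1 := by
        simp only [mul_sub, mul_one, sum_sub_distrib, hv.sum_eq_one, sum_div, mul_div_assoc]
        ring
    _ ≤ _ := Real.add_one_le_exp _

lemma translationSum_pow_mul_pow_exp_le (hu : IsProbWeight s u) (hv : IsProbWeight t v) {g : M →+ ℝ}
    (hs : ∀ i ∈ s, g (φ i) ∈ Set.Icc 0 1) (ht : ∀ i ∈ t, g (φ i) ∈ Set.Icc 0 1) (p q : ℕ) :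
    (translationSum s u φ ^ p * translationSum t v φ ^ q) (fun N => Real.exp (-(g N / 4))) 0 ≤
      Real.exp (-((p * ∑ i ∈ s, u i * g (φ i) + q * ∑ i ∈ t, v i * g (φ i)) / 5)) := by
  have hfactor {r : Finset α} {w : α → ℝ} (hw : IsProbWeight r w)
      (hr : ∀ i ∈ r, g (φ i) ∈ Set.Icc 0 1) (m : ℕ) :
      (∑ i ∈ r, w i * Real.exp (-(g (φ i) / 4))) ^ m ≤
        Real.exp (m * -((∑ i ∈ r, w i * g (φ i)) / 5)) := by
    rw [Real.exp_nat_mul]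
    exact pow_le_pow_left₀ (sum_nonneg fun i hi => mul_nonneg (hw.nonneg i hi) (Real.exp_pos _).le)
      (sum_mul_exp_neg_div_four_le hw hr) m
  have hexp (r : Finset α) (w : α → ℝ) (m : ℕ) :
      (translationSum r w φ ^ m) (fun N => Real.exp (-(g N / 4))) =
        (∑ i ∈ r, w i * Real.exp (-(g (φ i) / 4))) ^ m • fun N => Real.exp (-(g N / 4)) := by
    have h := translationSum_pow_exp r w φ ((AddMonoidHom.mulLeft (-(1 / 4))).comp g) m
    simp only [AddMonoidHom.coe_comp, AddMonoidHom.coe_mulLeft, Function.comp_apply, neg_mul,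
      one_div_mul_eq_div] at h
    exact h
  rw [Module.End.mul_apply, hexp, map_smul, hexp, smul_smul, Pi.smul_apply, map_zero, zero_div,
    neg_zero, Real.exp_zero, smul_eq_mul, mul_one, mul_comm,
    show -((p * ∑ i ∈ s, u i * g (φ i) + q * ∑ i ∈ t, v i * g (φ i)) / 5) =
      p * -((∑ i ∈ s, u i * g (φ i)) / 5) + q * -((∑ i ∈ t, v i * g (φ i)) / 5) by ring,
    Real.exp_add]
  exact mul_le_mul (hfactor hu hs p) (hfactor hv ht q) (pow_nonneg (sum_nonneg fun i hi =>
    mul_nonneg (hv.nonneg i hi) (Real.exp_pos _).le) q) (Real.exp_pos _).le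

end TranslationSum

section MeanEstimate

variable {ι : Type*}

lemma pow_mul_exp_neg_mul_le {c x : ℝ} (hc : 0 < c) (hx : 0 ≤ x) (r : ℕ) :
    x ^ r * Real.exp (-(c * x)) ≤ r.factorial / c ^ r := by
  have h := Real.pow_div_factorial_le_exp (c * x) (by positivity) r
  rw [div_le_iff₀ (by positivity), mul_pow] at h
  rw [Real.exp_neg, ← div_eq_mul_inv, div_le_div_iff₀ (Real.exp_pos _) (by positivity)]
  linarith

lemma prod_sqrt_le_pow_card {J : Finset ι} {ν : ι → ℝ} (hν : ∀ j ∈ J, ν j ∈ Set.Ioc 0 1) {n : ℕ}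
    (hn : 0 < n) : ∏ j ∈ J, √(Real.pi / 2 * (ν j * n)) ≤ (2 * n) ^ #J := by
  refine (prod_le_prod (fun _ _ => Real.sqrt_nonneg _) fun j hj => ?_).trans_eq (prod_const _)
  have hn1 : (1 : ℝ) ≤ n := mod_cast hn
  have hνn : ν j * n ≤ n := mul_le_of_le_one_left (by positivity) (hν j hj).2
  have : Real.pi / 2 * (ν j * n) ≤ 2 * n :=
    mul_le_mul (by linarith [Real.pi_le_four]) hνn (by have := (hν j hj).1; positivity) two_pos.le
  refine Real.sqrt_le_iff.2 ⟨by positivity, this.trans ?_⟩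
  nlinarith

lemma prod_sqrt_add_one_mul_exp_le {J : Finset ι} {ν : ι → ℝ} (hν : ∀ j ∈ J, ν j ∈ Set.Ioc 0 1)
    {n : ℕ} (hn : 0 < n) {c : ℝ} (hc : 0 < c) :
    (∏ j ∈ J, √(Real.pi / 2 * (ν j * n)) + 1) * Real.exp (-(c * n)) ≤
      2 ^ (#J + 1) * (#J + 1).factorial / c ^ (#J + 1) / n := by
  have hn1 : (1 : ℝ) ≤ n := mod_cast hn
  have hone : 1 ≤ (2 * n : ℝ) ^ #J := one_le_pow₀ (by linarith)
  rw [le_div_iff₀ (by positivity)]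
  calc (∏ j ∈ J, √(Real.pi / 2 * (ν j * n)) + 1) * Real.exp (-(c * n)) * n
      ≤ ((2 * n) ^ #J + (2 * n) ^ #J) * Real.exp (-(c * n)) * n := by
        gcongr
        exact prod_sqrt_le_pow_card hν hn
    _ = 2 ^ (#J + 1) * (n ^ (#J + 1) * Real.exp (-(c * n))) := by ring
    _ ≤ _ := by
        rw [mul_div_assoc]
        gcongr
        exact pow_mul_exp_neg_mul_le hc (by positivity) _

lemma div_mul_le_one_div_sq_mul {ν : ℝ} (hν : ν ∈ Set.Ioc 0 1) (n k : ℕ) :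
    (k + 1) / (ν * n) ≤ 1 / ν ^ 2 * ((k + 1) ^ 2 / n) := by
  rw [div_mul_eq_div_div, div_mul_div_comm, one_mul, ← div_div]
  have h0 := hν.1
  gcongr
  · exact le_self_pow₀ (by linarith [k.cast_nonneg (α := ℝ)]) two_ne_zero
  · exact pow_le_of_le_one h0.le hν.2 two_ne_zero

lemma moment_bound_le_of_four_mul_le {ν V G Q K : ℝ} (hν : ν ∈ Set.Ioc 0 1) {n k : ℕ} (hn : 0 < n)
    (hk : 4 * k ≤ n) (hV : V ≤ k ^ 2 + n) (hG : G ≤ Real.exp (-(ν * (n - k) / 5))) (hQ : 0 ≤ Q)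
    (hQK : Q * Real.exp (-(ν / 40 * n)) ≤ K / n) :
    1 / (ν * n) + 1 / (ν * n) ^ 2 * V + Q * Real.exp (ν * n / 8) * G ≤
      (2 / ν ^ 2 + K) * ((k + 1) ^ 2 / n) := by
  have h0 := hν.1
  have hn1 : (1 : ℝ) ≤ n := mod_cast hn
  have hk4 : (4 * k : ℝ) ≤ n := mod_cast hk
  have hvar : 1 / (ν * n) ^ 2 * V ≤ 1 / ν ^ 2 * ((k + 1) ^ 2 / n) :=
    calc 1 / (ν * n) ^ 2 * V ≤ 1 / (ν * n) ^ 2 * ((k + 1) ^ 2 * n) := by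
          gcongr
          nlinarith
      _ = _ := by field_simp
  have hexp : Q * Real.exp (ν * n / 8) * G ≤ K * ((k + 1) ^ 2 / n) :=
    calc Q * Real.exp (ν * n / 8) * G
        ≤ Q * Real.exp (ν * n / 8) * Real.exp (-(ν * (n - k) / 5)) := by gcongr
      _ = Q * Real.exp (ν * n / 8 + -(ν * (n - k) / 5)) := by rw [mul_assoc, Real.exp_add]
      _ ≤ Q * Real.exp (-(ν / 40 * n)) := by
          gcongr
          nlinarith
      _ ≤ K / n := hQK
      _ ≤ K / n * (k + 1) ^ 2 :=
          le_mul_of_one_le_right (le_trans (by positivity) hQK) (one_le_pow₀ (by linarith))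
      _ = _ := by ring
  have hone : 1 / (ν * n) ≤ (k + 1) / (ν * n) := by gcongr; linarith
  linarith [hone, div_mul_le_one_div_sq_mul hν n k,
    (by ring : (2 / ν ^ 2 + K) * ((k + 1) ^ 2 / n : ℝ) = 1 / ν ^ 2 * ((k + 1) ^ 2 / n) +
      1 / ν ^ 2 * ((k + 1) ^ 2 / n) + K * ((k + 1) ^ 2 / n))]

lemma exists_abs_mean_prod_survivalProb_sub_one_le_of_four_mul_le {J : Finset ι} {ν : ι → ℝ}
    (hν : ∀ j ∈ J, ν j ∈ Set.Ioc 0 1) :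
    ∃ C : ℝ, 0 ≤ C ∧ ∀ (E : ((ι → ℕ) → ℝ) →ₗ[ℝ] ℝ) (n k : ℕ), IsMean E → 0 < n → 4 * k ≤ n →
      (∀ j ∈ J, |E fun N => N j - ν j * n| ≤ k) →
      (∀ j ∈ J, (E fun N => (N j - ν j * n) ^ 2) ≤ k ^ 2 + n) →
      (∀ j ∈ J, (E fun N => Real.exp (-(N j / 4))) ≤ Real.exp (-(ν j * (n - k) / 5))) →
      |(∏ j ∈ J, √(Real.pi / 2 * (ν j * n))) * (E fun N => ∏ j ∈ J, survivalProb (N j) 0) - 1| ≤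
        C * (k + 1) ^ 2 / n := by
  obtain ⟨C, hC, hmean⟩ := exists_abs_mean_prod_survivalProb_le J
  let K (j : ι) : ℝ := 2 ^ (#J + 1) * (#J + 1).factorial / (ν j / 40) ^ (#J + 1)
  have hK {j : ι} (hj : j ∈ J) : 0 ≤ K j := by have := (hν j hj).1; positivity
  refine ⟨C * ∑ j ∈ J, (2 / ν j ^ 2 + K j) + ∑ j ∈ J, 1 / ν j ^ 2,
    add_nonneg (mul_nonneg hC (sum_nonneg fun j hj => add_nonneg (by positivity) (hK hj)))
      (sum_nonneg fun j _ => by positivity),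
    fun E n k hE hn hk hL hV hG => ?_⟩
  have hn0 : (0 : ℝ) < n := mod_cast hn
  refine (hmean E (fun j => ν j * n) hE fun j hj => mul_pos (hν j hj).1 hn0).trans ?_
  rw [mul_div_assoc, add_mul, mul_assoc, sum_mul, sum_mul]
  refine add_le_add (mul_le_mul_of_nonneg_left (sum_le_sum fun j hj => ?_) hC)
    (sum_le_sum fun j hj => ?_)
  · exact moment_bound_le_of_four_mul_le (hν j hj) hn hk (hV j hj) (hG j hj)
      (add_nonneg (prod_nonneg fun _ _ => Real.sqrt_nonneg _) zero_le_one)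
      (prod_sqrt_add_one_mul_exp_le hν hn (div_pos (hν j hj).1 (by norm_num)))
  · have h0 := (hν j hj).1
    calc 1 / (2 * (ν j * n)) * |E fun N => N j - ν j * n|
        ≤ 1 / (2 * (ν j * n)) * (2 * (k + 1)) := by
          gcongr
          linarith [hL j hj, k.cast_nonneg (α := ℝ)]
      _ = (k + 1) / (ν j * n) := by field_simp
      _ ≤ _ := div_mul_le_one_div_sq_mul (hν j hj) n k

theorem exists_abs_mean_prod_survivalProb_sub_one_le {J : Finset ι} {ν : ι → ℝ}
    (hν : ∀ j ∈ J, ν j ∈ Set.Ioc 0 1) :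
    ∃ C : ℝ, 0 ≤ C ∧ ∀ (E : ((ι → ℕ) → ℝ) →ₗ[ℝ] ℝ) (n k : ℕ), IsMean E → 0 < n →
      (∀ j ∈ J, |E fun N => N j - ν j * n| ≤ k) →
      (∀ j ∈ J, (E fun N => (N j - ν j * n) ^ 2) ≤ k ^ 2 + n) →
      (∀ j ∈ J, (E fun N => Real.exp (-(N j / 4))) ≤ Real.exp (-(ν j * (n - k) / 5))) →
      |(∏ j ∈ J, √(Real.pi / 2 * (ν j * n))) * (E fun N => ∏ j ∈ J, survivalProb (N j) 0) - 1| ≤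
        C * (k + 1) ^ (#J + 2) / n := by
  obtain ⟨C, hC, hsmall⟩ := exists_abs_mean_prod_survivalProb_sub_one_le_of_four_mul_le hν
  refine ⟨C + 8 * 8 ^ #J, by positivity, fun E n k hE hn hL hV hG => ?_⟩
  have hn0 : (0 : ℝ) < n := mod_cast hn
  have hk1 : (1 : ℝ) ≤ k + 1 := by linarith [k.cast_nonneg (α := ℝ)]
  rw [add_mul, add_div]
  rcases le_or_gt (4 * k) n with hk | hk
  · refine (hsmall E n k hE hn hk hL hV hG).trans (le_add_of_le_of_nonneg ?_ (by positivity))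
    gcongr
    omega
  refine le_add_of_nonneg_of_le (by positivity) ?_
  set P := ∏ j ∈ J, √(Real.pi / 2 * (ν j * n))
  have hP : 0 ≤ P := prod_nonneg fun j _ => Real.sqrt_nonneg _
  have hk' : (n : ℝ) ≤ 4 * (k + 1) := by
    have : (n : ℝ) < 4 * k := mod_cast hk
    linarith
  rw [le_div_iff₀ hn0]
  calc |P * (E fun N => ∏ j ∈ J, survivalProb (N j) 0) - 1| * n
      ≤ (P * |E fun N => ∏ j ∈ J, survivalProb (N j) 0| + 1) * n := by
        gcongr
        refine (abs_sub _ _).trans ?_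
        rw [abs_mul, abs_of_nonneg hP, abs_one]
    _ ≤ ((2 * n) ^ #J * 1 + 1) * n := by
        gcongr
        · exact prod_sqrt_le_pow_card hν hn
        · exact hE.abs_prod_survivalProb_le_one J
    _ ≤ ((2 * (4 * (k + 1))) ^ #J * 1 + (2 * (4 * (k + 1))) ^ #J) * (4 * (k + 1)) := by
        gcongr
        exact one_le_pow₀ (by linarith)
    _ = 8 * 8 ^ #J * (k + 1) ^ (#J + 1) := by
        rw [show (2 * (4 * (k + 1)) : ℝ) = 8 * (k + 1) by ring, mul_pow]
        ring
    _ ≤ _ := by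
        gcongr
        norm_num

end MeanEstimate

section LatticeWalk

variable {α ι : Type*} {s t : Finset α} {u v : α → ℝ} {φ : α → ι → ℕ} {J : Finset ι}

/-- The mean of the `j`-th coordinate of the step `φ i` when `i ∈ s` has probability `v i`. -/
def meanStep (s : Finset α) (v : α → ℝ) (φ : α → ι → ℕ) (j : ι) : ℝ := ∑ i ∈ s, v i * φ i j

lemma IsProbWeight.meanStep_mem_Icc (hv : IsProbWeight s v) {j : ι} (hφ : ∀ i ∈ s, φ i j ≤ 1) :
    meanStep s v φ j ∈ Set.Icc 0 1 :=
  ⟨sum_nonneg fun i hi => mul_nonneg (hv.nonneg i hi) (Nat.cast_nonneg _),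
    hv.sum_eq_one ▸ sum_le_sum fun i hi =>
      mul_le_of_le_one_right (hv.nonneg i hi) (mod_cast hφ i hi)⟩

lemma abs_add_mul_add_mul_sub_le {a b : ℝ} (ha : a ∈ Set.Icc 0 1) (hb : b ∈ Set.Icc 0 1)
    (q k : ℕ) : |(q + k : ℕ) * a + q * b - (a + b) / 2 * (2 * q + k : ℕ)| ≤ k := by
  have hdiff : |a - b| ≤ 2 := abs_le.2 ⟨by linarith [ha.1, hb.2], by linarith [ha.2, hb.1]⟩
  calc _ = k / 2 * |a - b| := by
        rw [← abs_of_nonneg (by positivity : (0 : ℝ) ≤ k / 2), ← abs_mul]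
        push_cast
        ring_nf
    _ ≤ k / 2 * 2 := by gcongr
    _ = k := by ring

theorem exists_abs_translationSum_prod_survivalProb_sub_one_le
    (hu : IsProbWeight s u) (hv : IsProbWeight t v)
    (hs : ∀ j ∈ J, ∀ i ∈ s, φ i j ≤ 1) (ht : ∀ j ∈ J, ∀ i ∈ t, φ i j ≤ 1)
    (hpos : ∀ j ∈ J, 0 < meanStep s u φ j + meanStep t v φ j) :
    ∃ C : ℝ, 0 ≤ C ∧ ∀ n k q : ℕ, 0 < n → 2 * q + k = n →
      |(∏ j ∈ J, √(Real.pi / 2 * ((meanStep s u φ j + meanStep t v φ j) / 2 * n))) *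
          (translationSum s u φ ^ (q + k) * translationSum t v φ ^ q)
            (fun N => ∏ j ∈ J, survivalProb (N j) 0) 0 - 1| ≤ C * (k + 1) ^ (#J + 2) / n := by
  have hμ {j : ι} (hj : j ∈ J) := hu.meanStep_mem_Icc (hs j hj)
  have hμ' {j : ι} (hj : j ∈ J) := hv.meanStep_mem_Icc (ht j hj)
  obtain ⟨C, hC, hmean⟩ := exists_abs_mean_prod_survivalProb_sub_one_le
    (ν := fun j => (meanStep s u φ j + meanStep t v φ j) / 2)
    fun j hj => ⟨half_pos (hpos j hj), by linarith [(hμ hj).2, (hμ' hj).2]⟩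
  refine ⟨C, hC, fun n k q hn hnk => ?_⟩
  let g (j : ι) : (ι → ℕ) →+ ℝ := (Nat.castAddMonoidHom ℝ).comp (Pi.evalAddMonoidHom _ j)
  have hg {j : ι} {r : Finset α} (hr : ∀ i ∈ r, φ i j ≤ 1) : ∀ i ∈ r, g j (φ i) ∈ Set.Icc 0 1 :=
    fun i hi => ⟨Nat.cast_nonneg _, Nat.cast_le_one.2 (hr i hi)⟩
  have hnR : (n : ℝ) = 2 * q + k := mod_cast hnk.symm
  have hdrift {j : ι} (hj : j ∈ J) : |(q + k : ℕ) * meanStep s u φ j + q * meanStep t v φ j -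
      (meanStep s u φ j + meanStep t v φ j) / 2 * n| ≤ k := by
    rw [← hnk]
    exact abs_add_mul_add_mul_sub_le (hμ hj) (hμ' hj) q k
  refine hmean _ n k (isMean_translationSum_pow_mul_pow hu hv (q + k) q) hn (fun j hj => ?_)
    (fun j hj => ?_) fun j hj => ?_
  · exact (congrArg abs (translationSum_pow_mul_pow_sub_const hu hv (g j) _ _ _)).trans_le
      (hdrift hj)
  · refine (translationSum_pow_mul_pow_sq_sub_const_le hu hv (hg (hs j hj)) (hg (ht j hj))
      _ _ _).trans (add_le_add (sq_le_sq' ?_ ?_) ?_)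
    · exact (abs_le.1 (hdrift hj)).1
    · exact (abs_le.1 (hdrift hj)).2
    · exact (by push_cast; linarith)
  · refine (translationSum_pow_mul_pow_exp_le hu hv (hg (hs j hj)) (hg (ht j hj)) _ _).trans
      (Real.exp_le_exp.2 (neg_le_neg (div_le_div_of_nonneg_right ?_ (by norm_num))))
    have h : 0 ≤ k * meanStep s u φ j := mul_nonneg k.cast_nonneg (hμ hj).1
    calc _ ≤ (q + k : ℕ) * meanStep s u φ j + q * meanStep t v φ j := by
          rw [hnR]
          push_cast
          linarith
      _ = _ := rfl

end LatticeWalk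

section AxisSymmetric

variable {ι : Type*} [DecidableEq ι] {S : Finset (ι → ℤ)} {w : (ι → ℤ) → ℝ} {J : Finset ι}

/-- Invariance of a weighted step set under negation of the `j`-th coordinate. -/
def AxisSymmetric (S : Finset (ι → ℤ)) (w : (ι → ℤ) → ℝ) (j : ι) : Prop :=
  ∀ i ∈ S, Function.update i j (-(i j)) ∈ S ∧ w (Function.update i j (-(i j))) = w i

lemma AxisSymmetric.filter_apply_eq {j l : ι} (h : AxisSymmetric S w j) (hj : j ≠ l) (e : ℤ) :
    AxisSymmetric {i ∈ S | i l = e} w j := by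
  intro i hi
  rw [mem_filter] at hi ⊢
  rw [Function.update_of_ne hj.symm]
  exact ⟨⟨(h i hi.1).1, hi.2⟩, (h i hi.1).2⟩

lemma AxisSymmetric.sum_mul_apply_neg {j : ι} (h : AxisSymmetric S w j) {c : (ι → ℤ) → ℝ}
    (hc : ∀ i, c (Function.update i j (-(i j))) = c i) (f : ℤ → ℝ) :
    ∑ i ∈ S, w i * (c i * f (-(i j))) = ∑ i ∈ S, w i * (c i * f (i j)) :=
  sum_nbij' (fun i => Function.update i j (-(i j))) (fun i => Function.update i j (-(i j)))
    (fun i hi => (h i hi).1) (fun i hi => (h i hi).1) (fun i _ => by simp) (fun i _ => by simp)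
    fun i hi => by rw [(h i hi).2, hc, Function.update_self]

lemma AxisSymmetric.sum_mul_congr {j : ι} (h : AxisSymmetric S w j) {c : (ι → ℤ) → ℝ}
    (hc : ∀ i, c (Function.update i j (-(i j))) = c i) {f g : ℤ → ℝ}
    (hfg : ∀ i ∈ S, f (i j) + f (-(i j)) = g (i j) + g (-(i j))) :
    ∑ i ∈ S, w i * (c i * f (i j)) = ∑ i ∈ S, w i * (c i * g (i j)) := by
  have hsum : ∑ i ∈ S, w i * (c i * f (i j)) + ∑ i ∈ S, w i * (c i * f (-(i j))) =
      ∑ i ∈ S, w i * (c i * g (i j)) + ∑ i ∈ S, w i * (c i * g (-(i j))) := by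
    simp only [← sum_add_distrib, ← mul_add]
    exact sum_congr rfl fun i hi => by rw [hfg i hi]
  rw [h.sum_mul_apply_neg hc f, h.sum_mul_apply_neg hc g] at hsum
  linarith

lemma sum_mul_prod_congr_of_axisSymmetric (h : ∀ j ∈ J, AxisSymmetric S w j) {c : (ι → ℤ) → ℝ}
    (hc : ∀ j ∈ J, ∀ i, c (Function.update i j (-(i j))) = c i) {f g : ι → ℤ → ℝ}
    (hfg : ∀ j ∈ J, ∀ i ∈ S, f j (i j) + f j (-(i j)) = g j (i j) + g j (-(i j))) :
    ∑ i ∈ S, w i * (c i * ∏ j ∈ J, f j (i j)) = ∑ i ∈ S, w i * (c i * ∏ j ∈ J, g j (i j)) := by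
  induction J using Finset.induction_on generalizing c with
  | empty => simp
  | insert a J ha ih =>
    simp only [forall_mem_insert, prod_insert ha] at h hc hfg ⊢
    have hne {j : ι} (hj : j ∈ J) : a ≠ j := by
      rintro rfl
      exact ha hj
    calc ∑ i ∈ S, w i * (c i * (f a (i a) * ∏ j ∈ J, f j (i j)))
        = ∑ i ∈ S, w i * (c i * f a (i a) * ∏ j ∈ J, f j (i j)) := by simp only [mul_assoc]
      _ = ∑ i ∈ S, w i * (c i * f a (i a) * ∏ j ∈ J, g j (i j)) :=
          ih h.2 (fun j hj i => by rw [Function.update_of_ne (hne hj), hc.2 j hj]) hfg.2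
      _ = ∑ i ∈ S, w i * ((c i * ∏ j ∈ J, g j (i j)) * f a (i a)) := by
          simp only [mul_right_comm]
      _ = ∑ i ∈ S, w i * ((c i * ∏ j ∈ J, g j (i j)) * g a (i a)) := by
          refine h.1.sum_mul_congr (fun i => ?_) hfg.1
          rw [hc.1, prod_congr rfl fun j hj => by rw [Function.update_of_ne (hne hj).symm]]
      _ = _ := by simp only [mul_assoc, mul_comm (g a _)]

end AxisSymmetric

section SmallSteps

variable {ι : Type*} [DecidableEq ι] {S : Finset (ι → ℤ)} {w : (ι → ℤ) → ℝ} {J : Finset ι}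

lemma survivalProb_add_add_survivalProb_add_neg (N : ℕ) {x z : ℤ} (hx : 0 ≤ x)
    (hz : z = -1 ∨ z = 0 ∨ z = 1) :
    survivalProb N (x + z) + survivalProb N (x + -z) =
      survivalProb (N + z.natAbs) x + survivalProb (N + (-z).natAbs) x := by
  have h := survivalProb_succ N hx
  rcases hz with rfl | rfl | rfl
  · simp only [neg_neg, Int.natAbs_neg, Int.natAbs_one, ← sub_eq_add_neg]
    linarith
  · simp
  · simp only [Int.natAbs_neg, Int.natAbs_one, ← sub_eq_add_neg]
    linarith

lemma translationSum_prod_survivalProb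
    (hS : ∀ i ∈ S, ∀ j, i j = -1 ∨ i j = 0 ∨ i j = 1) (h : ∀ j ∈ J, AxisSymmetric S w j)
    {x : ι → ℤ} (hx : ∀ j, 0 ≤ x j) :
    translationSum S w (fun i j => (i j).natAbs) (fun N => ∏ j ∈ J, survivalProb (N j) (x j)) =
      ∑ i ∈ S, w i • fun N : ι → ℕ => ∏ j ∈ J, survivalProb (N j) ((x + i) j) := by
  ext N
  have := sum_mul_prod_congr_of_axisSymmetric h (c := 1) (fun _ _ _ => rfl)
    (f := fun j z => survivalProb (N j) (x j + z))
    (g := fun j z => survivalProb (N j + z.natAbs) (x j))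
    fun j _ i hi => survivalProb_add_add_survivalProb_add_neg (N j) (hx j) (hS i hi j)
  simpa [translationSum_apply] using this.symm

end SmallSteps

section OrthantWalkCount

variable {ι : Type*} [Fintype ι] {S : Finset (ι → ℤ)} {w : (ι → ℤ) → ℝ}

/-- The weighted number of walks of length `n` with steps in `S` (weights `w`), beginning at `x`
and confined to the non-negative orthant from the first step on. -/
noncomputable def orthantWalkCount (S : Finset (ι → ℤ)) (w : (ι → ℤ) → ℝ) (n : ℕ) (x : ι → ℤ) :
    ℝ :=
  ∑ u : Fin n → S,
    if ∀ k : Fin n, ∀ m : ι, 0 ≤ x m + ∑ j ∈ Iic k, (u j : ι → ℤ) m then ∏ k, w (u k) else 0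

lemma weightedWalkCount_eq_orthantWalkCount (d : ℕ) (S : Finset (Fin d → ℤ))
    (w : (Fin d → ℤ) → ℝ) (n : ℕ) : weightedWalkCount d S w n = orthantWalkCount S w n 0 := by
  simp [weightedWalkCount, orthantWalkCount]

lemma orthantWalkCount_zero (S : Finset (ι → ℤ)) (w : (ι → ℤ) → ℝ) (x : ι → ℤ) :
    orthantWalkCount S w 0 x = 1 := by simp [orthantWalkCount]

lemma sum_Iic_succ {M : Type*} [AddCommMonoid M] {n : ℕ} (f : Fin (n + 1) → M) (k : Fin n) :
    ∑ j ∈ Iic k.succ, f j = f 0 + ∑ j ∈ Iic k, f j.succ := by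
  rw [← Icc_bot, bot_eq_zero, ← Ioc_insert_left (Fin.zero_le _), sum_insert left_notMem_Ioc,
    ← Fin.map_succEmb_Iic, sum_map]
  rfl

lemma orthantWalkCount_succ (S : Finset (ι → ℤ)) (w : (ι → ℤ) → ℝ) (n : ℕ) (x : ι → ℤ) :
    orthantWalkCount S w (n + 1) x =
      ∑ i ∈ S, if ∀ m, 0 ≤ x m + i m then w i * orthantWalkCount S w n (x + i) else 0 := by
  have hIic (f : Fin (n + 1) → ℤ) : ∑ j ∈ Iic 0, f j = f 0 := by
    rw [← bot_eq_zero, Iic_bot, sum_singleton]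
  rw [orthantWalkCount, ← (Fin.consEquiv fun _ => S).sum_comp, Fintype.sum_prod_type,
    ← sum_coe_sort S]
  refine sum_congr rfl fun i _ => ?_
  simp only [orthantWalkCount, Fin.consEquiv_apply, Fin.prod_univ_succ, Fin.cons_zero,
    Fin.cons_succ, Fin.forall_fin_succ, hIic, sum_Iic_succ]
  split_ifs with h
  · simp only [h, implies_true, true_and, mul_sum, Pi.add_apply, mul_ite, mul_zero, add_assoc]
  · simp [h]

variable [DecidableEq ι] {l : ι}

lemma ballotSum_prod_survivalProb_eq_zero (a b : Module.End ℝ ((ι → ℕ) → ℝ)) (n : ℕ) {y : ι → ℤ}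
    {m : ι} (hm : y m < 0) :
    ballotSum a b n (y l) (fun N => ∏ j ∈ univ.erase l, survivalProb (N j) (y j)) = 0 := by
  rcases eq_or_ne m l with rfl | hml
  · rw [ballotSum_of_neg a b n hm, LinearMap.zero_apply]
  · convert map_zero (ballotSum a b n (y l))
    exact prod_eq_zero (mem_erase.2 ⟨hml, mem_univ m⟩) (survivalProb_of_neg _ hm)

theorem orthantWalkCount_eq_ballotSum
    (hS : ∀ i ∈ S, ∀ j, i j = -1 ∨ i j = 0 ∨ i j = 1)
    (h : ∀ j ∈ univ.erase l, AxisSymmetric S w j) (hl : ∀ i ∈ S, i l = 0 → w i = 0) (n : ℕ)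
    {x : ι → ℤ} (hx : ∀ j, 0 ≤ x j) :
    orthantWalkCount S w n x =
      ballotSum (translationSum {i ∈ S | i l = -1} w fun i j => (i j).natAbs)
        (translationSum {i ∈ S | i l = 1} w fun i j => (i j).natAbs) n (x l)
        (fun N => ∏ j ∈ univ.erase l, survivalProb (N j) (x j)) 0 := by
  induction n generalizing x with
  | zero =>
    simp [orthantWalkCount_zero, ballotSum_zero_of_nonneg _ _ (hx l),
      survivalProb_zero_left (hx _)]
  | succ n ih =>
    have hcomm (e : ℤ) := commute_ballotSum
      (commute_translationSum {i ∈ S | i l = -1} {i ∈ S | i l = e} w w fun i j => (i j).natAbs)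
      (commute_translationSum {i ∈ S | i l = 1} {i ∈ S | i l = e} w w fun i j => (i j).natAbs) n
    have htrans (e : ℤ) := translationSum_prod_survivalProb (S := {i ∈ S | i l = e})
      (fun i hi => hS i (mem_filter.1 hi).1)
      (fun j hj => (h j hj).filter_apply_eq (ne_of_mem_erase hj) e) hx
    rw [orthantWalkCount_succ, ballotSum_succ_of_nonneg _ _ _ (hx l), ← (hcomm (-1) _).eq,
      ← (hcomm 1 _).eq, LinearMap.add_apply, Module.End.mul_apply, Module.End.mul_apply,
      htrans, htrans]
    simp only [map_sum, map_smul, Pi.add_apply, Finset.sum_apply, Pi.smul_apply, smul_eq_mul]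
    rw [sum_filter, sum_filter, ← sum_add_distrib]
    refine sum_congr rfl fun i hi => ?_
    set D := translationSum {i ∈ S | i l = -1} w fun i j => (i j).natAbs
    set U := translationSum {i ∈ S | i l = 1} w fun i j => (i j).natAbs
    trans w i * ballotSum D U n ((x + i) l)
      (fun N => ∏ j ∈ univ.erase l, survivalProb (N j) ((x + i) j)) 0
    · split_ifs with hxi
      · rw [ih (x := x + i) hxi]
      · push Not at hxi
        obtain ⟨m, hm⟩ := hxi
        rw [ballotSum_prod_survivalProb_eq_zero D U n (y := x + i) hm, Pi.zero_apply, mul_zero]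
    · rcases hS i hi l with e | e | e
      · simp [e, sub_eq_add_neg]
      · simp [e, hl i hi e]
      · simp [e]

end OrthantWalkCount

section LevelSteps

variable {ι : Type*} {S : Finset (ι → ℤ)} {w : (ι → ℤ) → ℝ} {l : ι}

/-- The total weight of the steps whose `l`-th coordinate is `e`. -/
def levelWeight (S : Finset (ι → ℤ)) (w : (ι → ℤ) → ℝ) (l : ι) (e : ℤ) : ℝ :=
  ∑ i ∈ S with i l = e, w i

/-- The weights normalised to a probability on the steps whose `l`-th coordinate is `e`. -/
noncomputable def levelProb (S : Finset (ι → ℤ)) (w : (ι → ℤ) → ℝ) (l : ι) (e : ℤ) :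
    (ι → ℤ) → ℝ :=
  (levelWeight S w l e)⁻¹ • w

/-- The transition operator of the walk on `ι → ℕ` that counts, for each coordinate, the moves made
in that coordinate by random steps whose `l`-th coordinate is `e`. -/
noncomputable def levelOp (S : Finset (ι → ℤ)) (w : (ι → ℤ) → ℝ) (l : ι) (e : ℤ) :
    Module.End ℝ ((ι → ℕ) → ℝ) :=
  translationSum {i ∈ S | i l = e} (levelProb S w l e) fun i j => (i j).natAbs

/-- The probability that a random step moves in the `j`-th coordinate, when its `l`-th coordinate is
`1` or `-1` with equal probability. -/
noncomputable def moveRate (S : Finset (ι → ℤ)) (w : (ι → ℤ) → ℝ) (l j : ι) : ℝ :=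
  (meanStep {i ∈ S | i l = 1} (levelProb S w l 1) (fun i j => (i j).natAbs) j +
    meanStep {i ∈ S | i l = -1} (levelProb S w l (-1)) (fun i j => (i j).natAbs) j) / 2

/-- The probability that no coordinate other than the `l`-th becomes negative along a random walk
started at the origin, given that it makes `p` steps with `l`-th coordinate `1` and `q` steps with
`l`-th coordinate `-1`. -/
noncomputable def lateralSurvivalProb [Fintype ι] [DecidableEq ι] (S : Finset (ι → ℤ))
    (w : (ι → ℤ) → ℝ) (l : ι) (p q : ℕ) : ℝ :=
  (levelOp S w l 1 ^ p * levelOp S w l (-1) ^ q)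
    (fun N => ∏ j ∈ univ.erase l, survivalProb (N j) 0) 0

/-- The weighted sum of `x` to the power of the `l`-th coordinate over the steps forward in the
`j`-th coordinate; this is `b_j(1, x)`. -/
noncomputable def forwardWeight (S : Finset (ι → ℤ)) (w : (ι → ℤ) → ℝ) (l j : ι) (x : ℝ) : ℝ :=
  ∑ i ∈ S with i j = 1, w i * x ^ i l

/-- The weighted sum of `x` to the power of the `l`-th coordinate over all steps, when none of them
is horizontal; this is `S(1, x)`. -/
noncomputable def verticalInventory (S : Finset (ι → ℤ)) (w : (ι → ℤ) → ℝ) (l : ι) (x : ℝ) : ℝ :=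
  levelWeight S w l (-1) / x + x * levelWeight S w l 1

/-- The standing assumptions on a weighted step set with distinguished coordinate `l`, in the case
that every step of positive weight moves in that coordinate. -/
structure IsVerticalWeighting [DecidableEq ι] (S : Finset (ι → ℤ)) (w : (ι → ℤ) → ℝ) (l : ι) :
    Prop where
  small : ∀ i ∈ S, ∀ j, i j = -1 ∨ i j = 0 ∨ i j = 1
  nonneg : ∀ i ∈ S, 0 ≤ w i
  symmetric : ∀ j ≠ l, AxisSymmetric S w j
  exists_move : ∀ j ≠ l, ∃ i ∈ S, i j ≠ 0 ∧ 0 < w i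
  ne_zero : ∀ i ∈ S, 0 < w i → i l ≠ 0
  exists_up : ∃ i ∈ S, i l = 1 ∧ 0 < w i
  exists_down : ∃ i ∈ S, i l = -1 ∧ 0 < w i

lemma levelWeight_pos (hw : ∀ i ∈ S, 0 ≤ w i) {e : ℤ} (he : ∃ i ∈ S, i l = e ∧ 0 < w i) :
    0 < levelWeight S w l e := by
  obtain ⟨i, hi, hie, hwi⟩ := he
  exact sum_pos' (fun i hi => hw i (mem_filter.1 hi).1) ⟨i, mem_filter.2 ⟨hi, hie⟩, hwi⟩

lemma isProbWeight_levelProb (hw : ∀ i ∈ S, 0 ≤ w i) {e : ℤ} (he : 0 < levelWeight S w l e) :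
    IsProbWeight {i ∈ S | i l = e} (levelProb S w l e) where
  nonneg i hi := mul_nonneg (inv_nonneg.2 he.le) (hw i (mem_filter.1 hi).1)
  sum_eq_one := by
    simp only [levelProb, Pi.smul_apply, ← smul_sum]
    exact inv_mul_cancel₀ he.ne'

lemma translationSum_eq_smul_levelOp {e : ℤ} (he : levelWeight S w l e ≠ 0) :
    (translationSum {i ∈ S | i l = e} w fun i j => (i j).natAbs) =
      levelWeight S w l e • levelOp S w l e := by
  rw [levelOp, ← translationSum_smul, levelProb, smul_inv_smul₀ he]

lemma levelWeight_mul_meanStep {e : ℤ} (he : levelWeight S w l e ≠ 0) (φ : (ι → ℤ) → ι → ℕ)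
    (j : ι) : levelWeight S w l e * meanStep {i ∈ S | i l = e} (levelProb S w l e) φ j =
      ∑ i ∈ S with i l = e, w i * φ i j := by
  simp only [meanStep, levelProb, Pi.smul_apply, smul_eq_mul, mul_assoc, ← mul_sum]
  rw [mul_inv_cancel_left₀ he]

namespace IsVerticalWeighting

variable [DecidableEq ι]

lemma up_pos (h : IsVerticalWeighting S w l) : 0 < levelWeight S w l 1 :=
  levelWeight_pos h.nonneg h.exists_up

lemma down_pos (h : IsVerticalWeighting S w l) : 0 < levelWeight S w l (-1) :=
  levelWeight_pos h.nonneg h.exists_down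

lemma meanStep_pos (h : IsVerticalWeighting S w l) {j : ι} {i : ι → ℤ} (hi : i ∈ S)
    (hij : i j ≠ 0) (hwi : 0 < w i) (hpos : 0 < levelWeight S w l (i l)) :
    0 < meanStep {k ∈ S | k l = i l} (levelProb S w l (i l)) (fun k j => (k j).natAbs) j := by
  have hprob := isProbWeight_levelProb h.nonneg hpos
  refine sum_pos' (fun k hk => mul_nonneg (hprob.nonneg k hk) (Nat.cast_nonneg _))
    ⟨i, mem_filter.2 ⟨hi, rfl⟩, mul_pos (mul_pos (inv_pos.2 hpos) hwi) ?_⟩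
  exact mod_cast Int.natAbs_pos.2 hij

lemma moveRate_pos (h : IsVerticalWeighting S w l) {j : ι} (hj : j ≠ l) :
    0 < moveRate S w l j := by
  obtain ⟨i, hi, hij, hwi⟩ := h.exists_move j hj
  have hnonneg {e : ℤ} (he : 0 < levelWeight S w l e) : 0 ≤ meanStep {k ∈ S | k l = e}
      (levelProb S w l e) (fun k j => (k j).natAbs) j :=
    sum_nonneg fun k hk => mul_nonneg ((isProbWeight_levelProb h.nonneg he).nonneg k hk)
      (Nat.cast_nonneg _)
  have hup := hnonneg h.up_pos
  have hdown := hnonneg h.down_pos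
  refine half_pos ?_
  have hpos := h.meanStep_pos hi hij hwi
  rcases h.small i hi l with hil | hil | hil
  · rw [hil] at hpos
    exact add_pos_of_nonneg_of_pos hup (hpos h.down_pos)
  · exact absurd hil (h.ne_zero i hi hwi)
  · rw [hil] at hpos
    exact add_pos_of_pos_of_nonneg (hpos h.up_pos) hdown

lemma eq_zero (h : IsVerticalWeighting S w l) {i : ι → ℤ} (hi : i ∈ S) (hil : i l = 0) : w i = 0 :=
  le_antisymm (not_lt.1 fun hwi => h.ne_zero i hi hwi hil) (h.nonneg i hi)

lemma sum_mul_eq_add (h : IsVerticalWeighting S w l) (f : (ι → ℤ) → ℝ) :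
    ∑ i ∈ S, w i * f i = ∑ i ∈ S with i l = 1, w i * f i + ∑ i ∈ S with i l = -1, w i * f i := by
  rw [sum_filter, sum_filter, ← sum_add_distrib]
  refine sum_congr rfl fun i hi => ?_
  rcases h.small i hi l with hil | hil | hil
  · simp [hil]
  · simp [hil, h.eq_zero hi hil]
  · simp [hil]

lemma two_mul_forwardWeight (h : IsVerticalWeighting S w l) {j : ι} (hj : j ≠ l) (x : ℝ) :
    2 * forwardWeight S w l j x = x * ∑ i ∈ S with i l = 1, w i * (i j).natAbs +
      x⁻¹ * ∑ i ∈ S with i l = -1, w i * (i j).natAbs := by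
  have hfold := (h.symmetric j hj).sum_mul_congr (c := fun i => x ^ i l)
    (f := fun t => if t = 1 then 1 else 0) (g := fun t => (t.natAbs : ℝ) / 2)
    (fun i => by rw [Function.update_of_ne hj.symm])
    (fun i hi => by rcases h.small i hi j with hij | hij | hij <;> norm_num [hij])
  have hleft : forwardWeight S w l j x = ∑ i ∈ S, w i * (x ^ i l * if i j = 1 then 1 else 0) := by
    simp only [forwardWeight, sum_filter, mul_ite, mul_one, mul_zero]
  rw [hleft, hfold, h.sum_mul_eq_add, mul_add, mul_sum, mul_sum, mul_sum, mul_sum]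
  congr 1 <;> refine sum_congr rfl fun i hi => ?_ <;> rw [(mem_filter.1 hi).2]
  · rw [zpow_one]
    ring
  · rw [zpow_neg_one]
    ring

lemma ne_zero_of_balanced (h : IsVerticalWeighting S w l) {x : ℝ}
    (hx : x ^ 2 * levelWeight S w l 1 = levelWeight S w l (-1)) : x ≠ 0 := by
  rintro rfl
  simp [h.down_pos.ne] at hx

lemma verticalInventory_eq (h : IsVerticalWeighting S w l) {x : ℝ}
    (hx : x ^ 2 * levelWeight S w l 1 = levelWeight S w l (-1)) :
    verticalInventory S w l x = 2 * x * levelWeight S w l 1 := by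
  have := h.ne_zero_of_balanced hx
  rw [verticalInventory, ← hx]
  field_simp
  ring

lemma forwardWeight_eq (h : IsVerticalWeighting S w l) {j : ι} (hj : j ≠ l) {x : ℝ}
    (hx : x ^ 2 * levelWeight S w l 1 = levelWeight S w l (-1)) :
    forwardWeight S w l j x = x * levelWeight S w l 1 * moveRate S w l j := by
  have hx0 := h.ne_zero_of_balanced hx
  have hinv : x * levelWeight S w l 1 = x⁻¹ * levelWeight S w l (-1) := by
    rw [← hx]
    field_simp
  refine mul_left_cancel₀ two_ne_zero ((h.two_mul_forwardWeight hj x).trans ?_)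
  rw [← levelWeight_mul_meanStep h.up_pos.ne' fun i j => (i j).natAbs,
    ← levelWeight_mul_meanStep h.down_pos.ne' fun i j => (i j).natAbs, moveRate]
  linear_combination -meanStep {i ∈ S | i l = -1} (levelProb S w l (-1))
    (fun i j => (i j).natAbs) j * hinv

lemma sqrt_ratio_balanced (h : IsVerticalWeighting S w l) :
    √(levelWeight S w l (-1) / levelWeight S w l 1) ^ 2 * levelWeight S w l 1 =
      levelWeight S w l (-1) := by
  rw [Real.sq_sqrt (div_pos h.down_pos h.up_pos).le, div_mul_cancel₀ _ h.up_pos.ne']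

lemma one_lt_sqrt_ratio (h : IsVerticalWeighting S w l)
    (hdrift : levelWeight S w l 1 < levelWeight S w l (-1)) :
    1 < √(levelWeight S w l (-1) / levelWeight S w l 1) := by
  rwa [Real.lt_sqrt zero_le_one, one_pow, one_lt_div h.up_pos]

variable [Fintype ι]

theorem orthantWalkCount_eq_sum (h : IsVerticalWeighting S w l) (n : ℕ) :
    orthantWalkCount S w n 0 = ∑ x ∈ antidiagonal n, ballotNumber 1 x.1 x.2 *
      (levelWeight S w l 1 ^ x.1 * levelWeight S w l (-1) ^ x.2 *
        lateralSurvivalProb S w l x.1 x.2) := by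
  have hballot := ballotSum_eq_sum_antidiagonal
    (commute_translationSum {i ∈ S | i l = -1} {i ∈ S | i l = 1} w w fun i j => (i j).natAbs) n 1
  rw [Nat.cast_one, sub_self] at hballot
  rw [orthantWalkCount_eq_ballotSum (x := 0) h.small
    (fun j hj => h.symmetric j (ne_of_mem_erase hj)) (fun _ => h.eq_zero) n fun _ => le_rfl,
    Pi.zero_apply, hballot, LinearMap.sum_apply, Finset.sum_apply]
  refine sum_congr rfl fun x _ => ?_
  rw [translationSum_eq_smul_levelOp h.up_pos.ne', translationSum_eq_smul_levelOp h.down_pos.ne',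
    smul_pow, smul_pow, smul_mul_smul_comm]
  simp [lateralSurvivalProb, mul_left_comm]

theorem exists_abs_lateralSurvivalProb_sub_one_le (h : IsVerticalWeighting S w l) :
    ∃ C : ℝ, 0 ≤ C ∧ ∀ n k q : ℕ, 0 < n → 2 * q + k = n →
      |(∏ j ∈ univ.erase l, √(Real.pi / 2 * (moveRate S w l j * n))) *
          lateralSurvivalProb S w l (q + k) q - 1| ≤
        C * (k + 1) ^ (#(univ.erase l) + 2) / n := by
  have hle (e : ℤ) : ∀ j ∈ univ.erase l, ∀ i ∈ S.filter (fun i => i l = e), (i j).natAbs ≤ 1 := by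
    intro j _ i hi
    have := h.small i (mem_filter.1 hi).1 j
    omega
  exact exists_abs_translationSum_prod_survivalProb_sub_one_le
    (isProbWeight_levelProb h.nonneg h.up_pos) (isProbWeight_levelProb h.nonneg h.down_pos)
    (hle 1) (hle (-1)) fun j hj => pos_of_mul_pos_left
      ((h.moveRate_pos (ne_of_mem_erase hj)).trans_eq (div_eq_mul_inv _ _)) (by norm_num)

end IsVerticalWeighting

end LevelSteps

section ParitySeries

lemma summable_add_one_pow_mul_geometric {z : ℝ} (hz : |z| < 1) (R : ℕ) :
    Summable fun k : ℕ => ((k : ℝ) + 1) ^ R * z ^ k := by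
  simp only [add_pow, one_pow, mul_one, sum_mul]
  refine summable_sum fun m _ => ?_
  simpa only [mul_right_comm] using
    (summable_pow_mul_geometric_of_norm_lt_one m hz).mul_right (R.choose m : ℝ)

lemma hasSum_add_one_mul_geometric {z : ℝ} (hz : |z| < 1) :
    HasSum (fun k : ℕ => ((k : ℝ) + 1) * z ^ k) (1 / (1 - z) ^ 2) := by
  simpa using hasSum_choose_mul_geometric_of_norm_lt_one (𝕜 := ℝ) 1 hz

lemma hasSum_ite_even_add_one_mul_geometric {z : ℝ} (hz : |z| < 1) (n : ℕ) :
    HasSum (fun k : ℕ => if Even (n + k) then ((k : ℝ) + 1) * z ^ k else 0)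
      (1 / 2 * (1 / (1 - z) ^ 2 + (-1) ^ n / (1 + z) ^ 2)) := by
  have hneg := (hasSum_add_one_mul_geometric ((abs_neg z).trans_lt hz)).mul_left ((-1) ^ n)
  rw [sub_neg_eq_add, mul_one_div] at hneg
  have hterm (k : ℕ) : (if Even (n + k) then ((k : ℝ) + 1) * z ^ k else 0) =
      1 / 2 * ((k + 1) * z ^ k + (-1) ^ n * ((k + 1) * (-z) ^ k)) := by
    rw [neg_pow z, mul_left_comm _ ((k : ℝ) + 1), ← mul_assoc ((-1 : ℝ) ^ n), ← pow_add]
    split_ifs with heven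
    · rw [heven.neg_one_pow]
      ring
    · rw [(Nat.not_even_iff_odd.1 heven).neg_one_pow]
      ring
  simpa only [hterm] using ((hasSum_add_one_mul_geometric hz).add hneg).mul_left (1 / 2)

lemma sum_antidiagonal_filter_le {M : Type*} [AddCommMonoid M] (n : ℕ) (f : ℕ → ℕ → M) :
    ∑ x ∈ antidiagonal n with x.2 ≤ x.1, f x.1 x.2 =
      ∑ k ∈ range (n + 1) with Even (n + k), f ((n + k) / 2) ((n - k) / 2) := by
  refine sum_nbij' (fun x => x.1 - x.2) (fun k => ((n + k) / 2, (n - k) / 2)) ?_ ?_ ?_ ?_ ?_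
  all_goals simp only [mem_filter, HasAntidiagonal.mem_antidiagonal, mem_range, Nat.even_iff,
    Prod.forall, Prod.mk.injEq]
  all_goals intros
  any_goals omega
  congr 1 <;> omega

lemma abs_sum_even_sub_le {z : ℝ} (hz : z ∈ Set.Ioo 0 1) {C : ℝ} (hC : 0 ≤ C) (R : ℕ) {n : ℕ}
    (hn : 0 < n) {u : ℕ → ℝ}
    (hu : ∀ k ≤ n, Even (n + k) → |u k - (k + 1)| ≤ C * (k + 1) ^ R / n) :
    |∑ k ∈ range (n + 1) with Even (n + k), z ^ k * u k -
        1 / 2 * (1 / (1 - z) ^ 2 + (-1) ^ n / (1 + z) ^ 2)| ≤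
      (C * ∑' k : ℕ, ((k : ℝ) + 1) ^ R * z ^ k + ∑' k : ℕ, ((k : ℝ) + 1) ^ 2 * z ^ k) / n := by
  have habs : |z| < 1 := (abs_of_pos hz.1).trans_lt hz.2
  have hn' : (0 : ℝ) < n := Nat.cast_pos.2 hn
  have hsum :
      HasSum (fun k => if k ∈ {k ∈ range (n + 1) | Even (n + k)} then z ^ k * u k else 0)
        (∑ k ∈ range (n + 1) with Even (n + k), z ^ k * u k) := by
    rw [← sum_congr rfl fun k hk => if_pos hk]
    exact hasSum_sum_of_ne_finset_zero fun k hk => if_neg hk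
  have hbound := ((((summable_add_one_pow_mul_geometric habs R).hasSum.mul_left C).add
    (summable_add_one_pow_mul_geometric habs 2).hasSum).div_const (n : ℝ))
  rw [← (hsum.sub (hasSum_ite_even_add_one_mul_geometric habs n)).tsum_eq, ← Real.norm_eq_abs]
  refine tsum_of_norm_bounded hbound fun k => ?_
  have hzk := pow_pos hz.1 k
  have hfst : 0 ≤ C * (((k : ℝ) + 1) ^ R * z ^ k) := by positivity
  have hsnd : 0 ≤ ((k : ℝ) + 1) ^ 2 * z ^ k := by positivity
  rw [Real.norm_eq_abs, le_div_iff₀ hn']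
  by_cases heven : Even (n + k)
  · rcases le_or_gt k n with hk | hk
    · rw [if_pos (mem_filter.2 ⟨mem_range_succ_iff.2 hk, heven⟩), if_pos heven, mul_comm _ (z ^ k),
        ← mul_sub, abs_mul, abs_of_pos hzk, mul_assoc]
      have := (le_div_iff₀ hn').1 (hu k hk heven)
      calc z ^ k * (|u k - (k + 1)| * n) ≤ z ^ k * (C * (k + 1) ^ R) := by gcongr
        _ ≤ _ := by linarith
    · rw [if_neg (by simp [hk]), if_pos heven, zero_sub, abs_neg, abs_of_nonneg (by positivity)]
      have hnk : (n : ℝ) ≤ k + 1 := mod_cast (by omega)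
      calc (k + 1) * z ^ k * n ≤ (k + 1) * z ^ k * (k + 1) := by gcongr
        _ ≤ _ := by linarith
  · simpa [heven] using add_nonneg hfst hsnd

lemma exists_abs_sum_antidiagonal_sub_le {z : ℝ} (hz : z ∈ Set.Ioo 0 1) {C : ℝ} (hC : 0 ≤ C)
    (R : ℕ) : ∃ C' : ℝ, 0 ≤ C' ∧ ∀ n : ℕ, 0 < n → ∀ u : ℕ → ℕ → ℝ,
      (∀ k q : ℕ, 2 * q + k = n → |u (q + k) q - (k + 1)| ≤ C * (k + 1) ^ R / n) →
      |∑ x ∈ antidiagonal n with x.2 ≤ x.1, z ^ (x.1 - x.2) * u x.1 x.2 -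
        1 / 2 * (1 / (1 - z) ^ 2 + (-1) ^ n / (1 + z) ^ 2)| ≤ C' / n := by
  have hnonneg (r : ℕ) : 0 ≤ ∑' k : ℕ, ((k : ℝ) + 1) ^ r * z ^ k :=
    tsum_nonneg fun k => mul_nonneg (by positivity) (pow_nonneg hz.1.le k)
  refine ⟨_, add_nonneg (mul_nonneg hC (hnonneg R)) (hnonneg 2), fun n hn u hu => ?_⟩
  have heq : ∑ x ∈ antidiagonal n with x.2 ≤ x.1, z ^ (x.1 - x.2) * u x.1 x.2 =
      ∑ k ∈ range (n + 1) with Even (n + k), z ^ k * u ((n + k) / 2) ((n - k) / 2) := by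
    rw [sum_antidiagonal_filter_le n fun p q => z ^ (p - q) * u p q]
    refine sum_congr rfl fun k hk => ?_
    rw [mem_filter, mem_range, Nat.even_iff] at hk
    congr 2
    omega
  rw [heq]
  refine abs_sum_even_sub_le hz hC R hn fun k hk heven => ?_
  rw [Nat.even_iff] at heven
  have hpq : (n + k) / 2 = (n - k) / 2 + k := by omega
  rw [hpq]
  exact hu k _ (by omega)

end ParitySeries

section BallotEstimate

lemma ballotNumber_div_two_pow_mul {n k q : ℕ} (h : 2 * q + k = n) :
    ballotNumber 1 (q + k) q / 2 ^ n * (n / 2 * √(Real.pi / 2 * n)) =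
      (k + 1) * ((n / (n + k + 2)) *
        (n.choose (q + k) / 2 ^ n * √(Real.pi / 2 * n))) := by
  have hballot : (ballotNumber 1 (q + k) q : ℝ) = n.choose (q + k) - n.choose (q + k + 1) := by
    have hsum : q + k + q = n := by omega
    simp [ballotNumber, hsum, show q < q + k + 1 by omega]
  have hmul := choose_succ_mul_add_of_two_mul_eq (n := n) (k := k) (p := q + k) (by omega)
  rw [← hballot] at hmul
  set r := √(Real.pi / 2 * n)
  field_simp
  linear_combination n * r * hmul

lemma mem_Icc_ballotNumber_div_two_pow_mul {n k q : ℕ} (hn : 0 < n) (h : 2 * q + k = n) :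
    (ballotNumber 1 (q + k) q / 2 ^ n * (n / 2 * √(Real.pi / 2 * n)) : ℝ) ∈
      Set.Icc (max 0 ((k + 1) - 4 * (k + 1) ^ 3 / n) : ℝ) (k + 1) := by
  rw [ballotNumber_div_two_pow_mul h, Set.mem_Icc, max_le_iff]
  have hn' : (0 : ℝ) < n := Nat.cast_pos.2 hn
  have hratio : 1 - (k + 2) / n ≤ (n : ℝ) / (n + k + 2) := by
    rw [sub_le_iff_le_add, div_add_div _ _ (by positivity) hn'.ne', one_le_div (by positivity)]
    nlinarith [sq_nonneg ((k : ℝ) + 2)]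
  have hratio_le : (n : ℝ) / (n + k + 2) ≤ 1 := (div_le_one (by positivity)).2 (by linarith)
  have hbinom := one_sub_le_choose_div_two_pow_mul_sqrt hn (show 2 * (q + k) = n + k by omega)
  have hbinom_le := choose_div_two_pow_mul_sqrt_le_one n (q + k)
  set a := (n : ℝ) / (n + k + 2)
  set b := n.choose (q + k) / 2 ^ n * √(Real.pi / 2 * n)
  have hb : 0 ≤ b := by positivity
  refine ⟨⟨by positivity, ?_⟩,
    mul_le_of_le_one_right (by positivity) (mul_le_one₀ hratio_le hb hbinom_le)⟩
  have hab : 1 - 4 * ((k : ℝ) + 1) ^ 2 / n ≤ a * b := by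
    have : ((k : ℝ) + 2) / n + (k ^ 2 + 2) / n ≤ 4 * (k + 1) ^ 2 / n := by
      rw [← add_div]
      gcongr
      nlinarith
    nlinarith [mul_nonneg (sub_nonneg.2 hratio_le) (sub_nonneg.2 hbinom_le)]
  calc (k : ℝ) + 1 - 4 * (k + 1) ^ 3 / n = (k + 1) * (1 - 4 * (k + 1) ^ 2 / n) := by ring
    _ ≤ _ := by gcongr

lemma abs_ballotNumber_mul_sub_le {n k q m : ℕ} (hn : 0 < n) (h : 2 * q + k = n) {C Y : ℝ}
    (hY : |Y - 1| ≤ C * (k + 1) ^ (m + 2) / n) :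
    |ballotNumber 1 (q + k) q / 2 ^ n * (n / 2 * √(Real.pi / 2 * n)) * Y - (k + 1)| ≤
      (C + 4) * (k + 1) ^ (m + 3) / n := by
  obtain ⟨hlower, hupper⟩ := mem_Icc_ballotNumber_div_two_pow_mul hn h
  set b := ballotNumber 1 (q + k) q / 2 ^ n * (n / 2 * √(Real.pi / 2 * n))
  rw [max_le_iff] at hlower
  have hpow : ((k : ℝ) + 1) ^ 3 ≤ (k + 1) ^ (m + 3) :=
    pow_le_pow_right₀ (by linarith [(Nat.cast_nonneg k : (0 : ℝ) ≤ k)]) (by omega)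
  calc |b * Y - (k + 1)| = |b * (Y - 1) - (k + 1 - b)| := by ring_nf
    _ ≤ b * |Y - 1| + (k + 1 - b) := by
      refine (abs_sub _ _).trans_eq ?_
      rw [abs_mul, abs_of_nonneg hlower.1, abs_of_nonneg (sub_nonneg.2 hupper)]
    _ ≤ (k + 1) * (C * (k + 1) ^ (m + 2) / n) + 4 * (k + 1) ^ (m + 3) / n := by
      gcongr
      exact sub_le_comm.1 (hlower.2.trans' (by gcongr))
    _ = (C + 4) * (k + 1) ^ (m + 3) / n := by ring

end BallotEstimate

section Asymptotics

variable {ι : Type*} [Fintype ι] [DecidableEq ι] {S : Finset (ι → ℤ)} {w : (ι → ℤ) → ℝ} {l : ι}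

/-- The factor that brings the number of walks of length `n`, divided by its exponential growth, to
the order of magnitude of a constant. -/
noncomputable def walkScale (S : Finset (ι → ℤ)) (w : (ι → ℤ) → ℝ) (l : ι) (n : ℕ) : ℝ :=
  n / 2 * √(Real.pi / 2 * n) * ∏ j ∈ univ.erase l, √(Real.pi / 2 * (moveRate S w l j * n))

/-- The factor common to the two constants `C_ρ` and `C_{-ρ}`: they are its quotients by
`(1 - 1 / ρ) ^ 2` and `(1 + 1 / ρ) ^ 2`. -/
noncomputable def leadingCoeff (S : Finset (ι → ℤ)) (w : (ι → ℤ) → ℝ) (l : ι) : ℝ :=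
  √(2 ^ Fintype.card ι / ∏ j ∈ univ.erase l, moveRate S w l j) /
    Real.pi ^ ((Fintype.card ι : ℝ) / 2)

/-- The radicand in the constant `C_x`. -/
noncomputable def walkRadicand (S : Finset (ι → ℤ)) (w : (ι → ℤ) → ℝ) (l : ι) (x : ℝ) : ℝ :=
  verticalInventory S w l x ^ Fintype.card ι /
    (x * (∏ j ∈ univ.erase l, forwardWeight S w l j x) * levelWeight S w l 1)

/-- The constant `C_x` in front of `S(1, x) ^ n` in the asymptotics of the number of walks. -/
noncomputable def walkCoeff (S : Finset (ι → ℤ)) (w : (ι → ℤ) → ℝ) (l : ι) (x : ℝ) : ℝ :=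
  verticalInventory S w l x * x / (2 * Real.pi ^ ((Fintype.card ι : ℝ) / 2) *
    levelWeight S w l (-1) * (1 - 1 / x) ^ 2) * √(walkRadicand S w l x)

lemma pow_mul_pow_div_two_mul_pow {a b ρ : ℝ} (hb : b ≠ 0) (hρ : ρ ≠ 0) (ha : ρ ^ 2 * b = a)
    {p q : ℕ} (hqp : q ≤ p) :
    b ^ p * a ^ q / (2 * ρ * b) ^ (p + q) = (1 / ρ) ^ (p - q) / 2 ^ (p + q) := by
  obtain ⟨k, rfl⟩ := Nat.exists_eq_add_of_le hqp
  rw [← ha, Nat.add_sub_cancel_left, one_div_pow]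
  field_simp
  ring

lemma sqrt_pow_eq_rpow {x : ℝ} (hx : 0 ≤ x) (m : ℕ) : √(x ^ m) = x ^ ((m : ℝ) / 2) := by
  rw [Real.sqrt_eq_rpow, ← Real.rpow_natCast, ← Real.rpow_mul hx, mul_one_div]

namespace IsVerticalWeighting

lemma prod_moveRate_pos (h : IsVerticalWeighting S w l) :
    0 < ∏ j ∈ univ.erase l, moveRate S w l j :=
  prod_pos fun _ hj => h.moveRate_pos (ne_of_mem_erase hj)

lemma leadingCoeff_pos (h : IsVerticalWeighting S w l) : 0 < leadingCoeff S w l := by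
  have := h.prod_moveRate_pos
  unfold leadingCoeff
  positivity

theorem exists_abs_orthantWalkCount_mul_walkScale_sub_le (h : IsVerticalWeighting S w l) {ρ : ℝ}
    (hρ : 1 < ρ) (hbal : ρ ^ 2 * levelWeight S w l 1 = levelWeight S w l (-1)) :
    ∃ C : ℝ, 0 ≤ C ∧ ∀ n : ℕ, 0 < n →
      |orthantWalkCount S w n 0 / (2 * ρ * levelWeight S w l 1) ^ n * walkScale S w l n -
        1 / 2 * (1 / (1 - 1 / ρ) ^ 2 + (-1) ^ n / (1 + 1 / ρ) ^ 2)| ≤ C / n := by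
  have hρ0 : 0 < ρ := one_pos.trans hρ
  obtain ⟨C, hC, hlateral⟩ := h.exists_abs_lateralSurvivalProb_sub_one_le
  obtain ⟨C', hC', hseries⟩ := exists_abs_sum_antidiagonal_sub_le
    ⟨one_div_pos.2 hρ0, (div_lt_one hρ0).2 hρ⟩ (add_nonneg hC zero_le_four)
    (#(univ.erase l) + 3)
  refine ⟨C', hC', fun n hn => ?_⟩
  have hsum : orthantWalkCount S w n 0 / (2 * ρ * levelWeight S w l 1) ^ n * walkScale S w l n =
      ∑ x ∈ antidiagonal n with x.2 ≤ x.1, (1 / ρ) ^ (x.1 - x.2) *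
        (ballotNumber 1 x.1 x.2 / 2 ^ n * (n / 2 * √(Real.pi / 2 * n)) *
          ((∏ j ∈ univ.erase l, √(Real.pi / 2 * (moveRate S w l j * n))) *
            lateralSurvivalProb S w l x.1 x.2)) := by
    rw [h.orthantWalkCount_eq_sum, sum_div, sum_mul, sum_filter]
    refine sum_congr rfl fun x hx => ?_
    split_ifs with hle
    · have hpow := pow_mul_pow_div_two_mul_pow h.up_pos.ne' hρ0.ne' hbal hle
      rw [HasAntidiagonal.mem_antidiagonal.1 hx] at hpow
      rw [walkScale]
      linear_combination ballotNumber 1 x.1 x.2 * lateralSurvivalProb S w l x.1 x.2 *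
        (n / 2 * √(Real.pi / 2 * n) *
          ∏ j ∈ univ.erase l, √(Real.pi / 2 * (moveRate S w l j * n))) * hpow
    · simp [ballotNumber, hle]
  rw [hsum]
  exact hseries n hn (fun p q => ballotNumber 1 p q / 2 ^ n * (n / 2 * √(Real.pi / 2 * n)) *
    ((∏ j ∈ univ.erase l, √(Real.pi / 2 * (moveRate S w l j * n))) *
      lateralSurvivalProb S w l p q)) fun k q hkq =>
        abs_ballotNumber_mul_sub_le hn hkq (hlateral n k q hn hkq)

lemma walkScale_mul_leadingCoeff (h : IsVerticalWeighting S w l) {n : ℕ} (hn : 0 < n) :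
    walkScale S w l n *
      (2 * leadingCoeff S w l * (n : ℝ) ^ (-(Fintype.card ι : ℝ) / 2 - 1)) = 1 := by
  have hn' : (0 : ℝ) < n := Nat.cast_pos.2 hn
  have hprod := h.prod_moveRate_pos
  have hcard : Fintype.card ι = #(univ.erase l) + 1 := (card_erase_add_one (mem_univ l)).symm
  have hnonneg (j : ι) (hj : j ∈ univ.erase l) : 0 ≤ Real.pi / 2 * (moveRate S w l j * n) := by
    have := h.moveRate_pos (ne_of_mem_erase hj)
    positivity
  have hsqrt : √(Real.pi / 2 * n) * (∏ j ∈ univ.erase l, √(Real.pi / 2 * (moveRate S w l j * n))) *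
      √(2 ^ Fintype.card ι / ∏ j ∈ univ.erase l, moveRate S w l j) =
        Real.pi ^ ((Fintype.card ι : ℝ) / 2) * (n : ℝ) ^ ((Fintype.card ι : ℝ) / 2) := by
    rw [← Real.mul_rpow Real.pi_pos.le hn'.le, ← sqrt_pow_eq_rpow (by positivity),
      ← Real.sqrt_prod _ hnonneg, ← Real.sqrt_mul (by positivity),
      ← Real.sqrt_mul (mul_nonneg (by positivity) (prod_nonneg hnonneg)), hcard]
    congr 1
    simp only [prod_mul_distrib, prod_const, div_pow, mul_pow]
    field_simp
    ring
  have hrpow : (n : ℝ) ^ ((Fintype.card ι : ℝ) / 2) *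
      (n : ℝ) ^ (-(Fintype.card ι : ℝ) / 2 - 1) * n = 1 := by
    rw [← Real.rpow_add hn', ← Real.rpow_add_one hn'.ne', ← Real.rpow_zero (n : ℝ)]
    ring_nf
  calc _ = √(Real.pi / 2 * n) * (∏ j ∈ univ.erase l, √(Real.pi / 2 * (moveRate S w l j * n))) *
        √(2 ^ Fintype.card ι / ∏ j ∈ univ.erase l, moveRate S w l j) /
          Real.pi ^ ((Fintype.card ι : ℝ) / 2) * (n : ℝ) ^ (-(Fintype.card ι : ℝ) / 2 - 1) * n := by
        rw [walkScale, leadingCoeff]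
        ring
    _ = 1 := by
      rw [hsqrt, mul_div_cancel_left₀ _ (Real.rpow_pos_of_pos Real.pi_pos _).ne', hrpow]

lemma walkRadicand_eq (h : IsVerticalWeighting S w l) {x : ℝ}
    (hx : x ^ 2 * levelWeight S w l 1 = levelWeight S w l (-1)) :
    walkRadicand S w l x = 2 ^ Fintype.card ι / ∏ j ∈ univ.erase l, moveRate S w l j := by
  have hx0 := h.ne_zero_of_balanced hx
  have hup := h.up_pos.ne'
  have hprod := h.prod_moveRate_pos.ne'
  have hcard : Fintype.card ι = #(univ.erase l) + 1 := (card_erase_add_one (mem_univ l)).symm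
  rw [walkRadicand, h.verticalInventory_eq hx,
    prod_congr rfl fun j hj => h.forwardWeight_eq (ne_of_mem_erase hj) hx, prod_mul_distrib,
    prod_const, hcard]
  field_simp
  ring

lemma walkCoeff_eq (h : IsVerticalWeighting S w l) {x : ℝ}
    (hx : x ^ 2 * levelWeight S w l 1 = levelWeight S w l (-1)) :
    walkCoeff S w l x = leadingCoeff S w l / (1 - 1 / x) ^ 2 := by
  have hx0 := h.ne_zero_of_balanced hx
  have hup := h.up_pos.ne'
  rw [walkCoeff, h.walkRadicand_eq hx, h.verticalInventory_eq hx, ← hx, leadingCoeff]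
  set K := √(2 ^ Fintype.card ι / ∏ j ∈ univ.erase l, moveRate S w l j)
  field_simp

lemma walkRadicand_pos (h : IsVerticalWeighting S w l) {x : ℝ}
    (hx : x ^ 2 * levelWeight S w l 1 = levelWeight S w l (-1)) : 0 < walkRadicand S w l x := by
  have := h.prod_moveRate_pos
  rw [h.walkRadicand_eq hx]
  positivity

theorem exists_abs_orthantWalkCount_sub_le (h : IsVerticalWeighting S w l) {ρ : ℝ} (hρ : 1 < ρ)
    (hbal : ρ ^ 2 * levelWeight S w l 1 = levelWeight S w l (-1)) :
    ∃ c : ℝ, 0 < c ∧ ∀ n : ℕ, 1 ≤ n →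
      |orthantWalkCount S w n 0 - (n : ℝ) ^ (-(Fintype.card ι : ℝ) / 2 - 1) *
          (verticalInventory S w l ρ ^ n * walkCoeff S w l ρ +
            verticalInventory S w l (-ρ) ^ n * walkCoeff S w l (-ρ))| ≤
        c * verticalInventory S w l ρ ^ n * (n : ℝ) ^ (-(Fintype.card ι : ℝ) / 2 - 2) := by
  obtain ⟨C, hC, hscaled⟩ := h.exists_abs_orthantWalkCount_mul_walkScale_sub_le hρ hbal
  have hneg : (-ρ) ^ 2 * levelWeight S w l 1 = levelWeight S w l (-1) := by rwa [neg_sq]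
  have hK := h.leadingCoeff_pos
  refine ⟨2 * leadingCoeff S w l * C + 1, by positivity, fun n hn => ?_⟩
  have hn' : (0 : ℝ) < n := Nat.cast_pos.2 hn
  have hpos : 0 < 2 * ρ * levelWeight S w l 1 :=
    mul_pos (mul_pos two_pos (one_pos.trans hρ)) h.up_pos
  have hscale := h.walkScale_mul_leadingCoeff hn
  have hpow : (n : ℝ) ^ (-(Fintype.card ι : ℝ) / 2 - 2) =
      (n : ℝ) ^ (-(Fintype.card ι : ℝ) / 2 - 1) / n := by
    rw [← Real.rpow_sub_one hn'.ne']
    ring_nf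
  rw [h.walkCoeff_eq hbal, h.walkCoeff_eq hneg, h.verticalInventory_eq hbal,
    h.verticalInventory_eq hneg, hpow, show 1 - 1 / -ρ = 1 + 1 / ρ by rw [div_neg, sub_neg_eq_add],
    show 2 * -ρ * levelWeight S w l 1 = -1 * (2 * ρ * levelWeight S w l 1) by ring, mul_pow (-1)]
  set W := orthantWalkCount S w n 0
  set N := (n : ℝ) ^ (-(Fintype.card ι : ℝ) / 2 - 1)
  set T := (2 * ρ * levelWeight S w l 1) ^ n
  set K := leadingCoeff S w l
  have hT : 0 < T := pow_pos hpos n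
  have : 0 < N := Real.rpow_pos_of_pos hn' _
  have hfactor : W - N * (T * (K / (1 - 1 / ρ) ^ 2) + (-1) ^ n * T * (K / (1 + 1 / ρ) ^ 2)) =
      T * (2 * K * N) * (W / T * walkScale S w l n -
        1 / 2 * (1 / (1 - 1 / ρ) ^ 2 + (-1) ^ n / (1 + 1 / ρ) ^ 2)) := by
    linear_combination -(W / T * T) * hscale - div_mul_cancel₀ W hT.ne'
  rw [hfactor, abs_mul, abs_of_pos (by positivity)]
  calc _ ≤ T * (2 * K * N) * (C / n) := by gcongr; exact hscaled n hn
    _ = 2 * K * C * T * (N / n) := by ring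
    _ ≤ (2 * K * C + 1) * T * (N / n) := by gcongr; exact le_add_of_nonneg_right zero_le_one

end IsVerticalWeighting

theorem negative_drift_asymptotics_Q_zero_general (h : IsVerticalWeighting S w l)
    (hdrift : levelWeight S w l 1 < levelWeight S w l (-1)) {ρ : ℝ}
    (hρ : ρ = √(levelWeight S w l (-1) / levelWeight S w l 1)) :
    0 < walkRadicand S w l ρ ∧ 0 < walkRadicand S w l (-ρ) ∧
      ∃ c : ℝ, 0 < c ∧ ∀ n : ℕ, 1 ≤ n →
        |orthantWalkCount S w n 0 - (n : ℝ) ^ (-(Fintype.card ι : ℝ) / 2 - 1) *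
            (verticalInventory S w l ρ ^ n * walkCoeff S w l ρ +
              verticalInventory S w l (-ρ) ^ n * walkCoeff S w l (-ρ))| ≤
          c * verticalInventory S w l ρ ^ n * (n : ℝ) ^ (-(Fintype.card ι : ℝ) / 2 - 2) := by
  have hbal : ρ ^ 2 * levelWeight S w l 1 = levelWeight S w l (-1) := hρ ▸ h.sqrt_ratio_balanced
  exact ⟨h.walkRadicand_pos hbal, h.walkRadicand_pos ((neg_sq ρ).symm ▸ hbal),
    h.exists_abs_orthantWalkCount_sub_le (hρ ▸ h.one_lt_sqrt_ratio hdrift) hbal⟩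

end Asymptotics

lemma filter_val_lt_sub_one {d : ℕ} (hd : d - 1 < d) :
    univ.filter (fun j : Fin d => (j : ℕ) < d - 1) = univ.erase ⟨d - 1, hd⟩ := by
  ext j
  simp only [mem_filter_univ, mem_erase, mem_univ, and_true, ne_eq, Fin.ext_iff]
  omega

theorem negative_drift_asymptotics_Q_zero
    (d : ℕ) (hd : 2 ≤ d)
    (S : Finset (Fin d → ℤ)) (w : (Fin d → ℤ) → ℝ)
    -- steps lie in {-1,0,1}^d \ {0}
    (hSsmall : ∀ i ∈ S, (∀ m : Fin d, i m = -1 ∨ i m = 0 ∨ i m = 1) ∧ i ≠ 0)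
    -- nonnegative weights
    (hw : ∀ i ∈ S, 0 ≤ w i)
    -- symmetry of the weighting over each of the first d-1 axes
    (hsym : ∀ j : Fin d, (j : ℕ) < d - 1 → ∀ i ∈ S,
      Function.update i j (-(i j)) ∈ S ∧ w (Function.update i j (-(i j))) = w i)
    -- a positively weighted step forwards and backwards in each coordinate
    (hfb : ∀ j : Fin d, (∃ i ∈ S, i j = 1 ∧ 0 < w i) ∧ (∃ i ∈ S, i j = -1 ∧ 0 < w i))
    (A1 B1 : ℝ)
    (hA1 : A1 = ∑ i ∈ S.filter (fun i => i ⟨d - 1, by omega⟩ = -1), w i)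
    (hB1 : B1 = ∑ i ∈ S.filter (fun i => i ⟨d - 1, by omega⟩ = 1), w i)
    -- negative drift
    (hdrift : B1 < A1)
    -- every positively weighted step moves in the last coordinate (Q(1) = 0)
    (hQ0 : ∀ i ∈ S, 0 < w i → i ⟨d - 1, by omega⟩ ≠ 0)
    (ρ : ℝ) (hρ : ρ = Real.sqrt (A1 / B1))
    (Sx bx : ℝ → ℝ) (Cx : ℝ → ℝ)
    (hSx : ∀ x, Sx x = A1 / x + x * B1)
    (hbx : ∀ x, bx x = ∏ j ∈ Finset.univ.filter (fun j : Fin d => (j : ℕ) < d - 1),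
        ∑ i ∈ S.filter (fun i => i j = 1), w i * x ^ (i ⟨d - 1, by omega⟩))
    (hCx : ∀ x, Cx x = (Sx x * x / (2 * Real.pi ^ ((d : ℝ) / 2) * A1 * (1 - 1 / x) ^ 2))
        * Real.sqrt (Sx x ^ d / (x * bx x * B1))) :
    (0 < Sx ρ ^ d / (ρ * bx ρ * B1)) ∧ (0 < Sx (-ρ) ^ d / ((-ρ) * bx (-ρ) * B1)) ∧
    ∃ c : ℝ, 0 < c ∧ ∀ n : ℕ, 1 ≤ n →
      |weightedWalkCount d S w n
          - (n : ℝ) ^ (-(d : ℝ) / 2 - 1) * (Sx ρ ^ n * Cx ρ + Sx (-ρ) ^ n * Cx (-ρ))|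
        ≤ c * Sx ρ ^ n * (n : ℝ) ^ (-(d : ℝ) / 2 - 2) := by
  have h : IsVerticalWeighting S w ⟨d - 1, by omega⟩ :=
    { small := fun i hi => (hSsmall i hi).1
      nonneg := hw
      symmetric := fun j hj => hsym j ((Nat.le_sub_one_of_lt j.2).lt_of_ne (Fin.val_ne_of_ne hj))
      exists_move := fun j _ => (hfb j).1.imp fun i ⟨hi, hij, hwi⟩ => ⟨hi, by simp [hij], hwi⟩
      ne_zero := hQ0
      exists_up := (hfb _).1
      exists_down := (hfb _).2 }
  obtain rfl : A1 = levelWeight S w ⟨d - 1, by omega⟩ (-1) := hA1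
  obtain rfl : B1 = levelWeight S w ⟨d - 1, by omega⟩ 1 := hB1
  obtain rfl : Sx = verticalInventory S w _ := funext hSx
  rw [filter_val_lt_sub_one (by omega)] at hbx
  obtain rfl : bx = fun x => ∏ j ∈ univ.erase _, forwardWeight S w _ j x := funext hbx
  obtain rfl : Cx = walkCoeff S w _ := funext fun x => by
    rw [hCx, walkCoeff, walkRadicand, Fintype.card_fin]
  simpa only [weightedWalkCount_eq_orthantWalkCount, walkRadicand, Fintype.card_fin] using
    negative_drift_asymptotics_Q_zero_general h hdrift hρ
end

section
/- Let 𝒮 ⊆ {−1,0,1}^d \ {0} be a (unweighted) step set that is symmetric over every axis (for every 1 ≤ j ≤ d, negating the j-th coordinate of any step of 𝒮 yields a step of 𝒮) and that moves forwards and backwards in each coordinate (for every j there exist steps in 𝒮 with j-th coordinate 1 and with j-th coordinate −1). For 1 ≤ k ≤ d let s^{(k)} = #{ i ∈ 𝒮 : i_k = 1 }. Then there is a constant c > 0 such that for all n ≥ 1, | s_n · |𝒮|^{−n} · n^{d/2} − (s^{(1)} ⋯ s^{(d)})^{−1/2} · π^{−d/2} · |𝒮|^{d/2} | ≤ c/n,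 where s_n is the number of walks of length n with steps in 𝒮, beginning at the origin and confined to ℕ^d. -/
open Finset

/-- The number of walks of length `n` with steps in `S`, beginning at the origin
and confined to the non-negative orthant `ℕ^d`. -/
noncomputable def walkCount (d : ℕ) (S : Finset (Fin d → ℤ)) (n : ℕ) : ℕ :=
  Nat.card {u : Fin n → (Fin d → ℤ) //
    (∀ k : Fin n, u k ∈ S) ∧
    ∀ k : Fin n, ∀ m : Fin d, 0 ≤ ∑ j ∈ Finset.Iic k, u j m}

/-!
Let `N_k` be the number of steps of a uniform random word of length `n` over `S` that move
coordinate `k`. Because `S` is symmetric, conditioning on which coordinates each step moves turns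
the coordinates into independent simple walks, so the probability of staying in the orthant is the
expectation of `∏ k, A (N_k)`, where `A N = C(N, ⌊(N + 1) / 2⌋) / 2 ^ N` is the probability that a
simple walk of `N` steps stays non-negative.

Each `N_k` is binomial with mean `n p_k`, and by Wallis' product `z_k = √(n p_k π / 2) A (N_k)` is
close to `1`. That `𝔼 ∏ k, z_k = 1 + O(1 / n)` needs neither the joint law nor the concentration
of the `N_k`: `log z ≥ (1 - z⁻²) / 2` bounds the product from below by a sum that is linear in the
`N_k`, while `2 ∏ k, z_k ≤ 1 + ∏ k, z_k ^ 2` and the inequality of arithmetic and geometric means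
bound it from above by moments of `1 / N_k`, one coordinate at a time. These are controlled by the
inverse factorial moments of the binomial law, which telescope under size biasing.
-/

open Real
open scoped BigOperators

namespace OrthantWalk

section Inequalities

theorem one_add_sum_one_sub_inv_sq_div_two_le_prod {ι : Type*} (s : Finset ι) {z : ι → ℝ}
    (hz : ∀ k ∈ s, 0 < z k) :
    1 + ∑ k ∈ s, (1 - (z k ^ 2)⁻¹) / 2 ≤ ∏ k ∈ s, z k := by
  have half_le_log : ∀ k ∈ s, (1 - (z k ^ 2)⁻¹) / 2 ≤ log (z k) := fun k hk => by
    have := one_sub_inv_le_log_of_pos (pow_pos (hz k hk) 2)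
    rw [log_pow] at this
    push_cast at this
    linarith
  calc 1 + ∑ k ∈ s, (1 - (z k ^ 2)⁻¹) / 2
      ≤ ∑ k ∈ s, log (z k) + 1 := by linarith [sum_le_sum half_le_log]
    _ ≤ exp (∑ k ∈ s, log (z k)) := add_one_le_exp _
    _ = ∏ k ∈ s, z k := by
      rw [exp_sum]
      exact prod_congr rfl fun k hk => exp_log (hz k hk)

theorem prod_le_expect_pow_card {ι : Type*} [Fintype ι] [Nonempty ι] {x : ι → ℝ}
    (hx : ∀ k, 0 ≤ x k) : ∏ k, x k ≤ 𝔼 k, x k ^ Fintype.card ι := by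
  have amgm := geom_mean_le_arith_mean_weighted univ (fun _ => (Fintype.card ι : ℝ)⁻¹)
    (fun k => x k ^ Fintype.card ι) (fun _ _ => by positivity) (by simp)
    (fun k _ => pow_nonneg (hx k) _)
  simpa only [pow_rpow_inv_natCast (hx _) Fintype.card_ne_zero, ← mul_sum,
    Fintype.expect_eq_sum_div_card, div_eq_inv_mul] using amgm

theorem prod_le_one_add_expect_sq_pow_card_div_two {ι : Type*} [Fintype ι] [Nonempty ι]
    (z : ι → ℝ) : ∏ k, z k ≤ (1 + 𝔼 k, (z k ^ 2) ^ Fintype.card ι) / 2 := by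
  have h := prod_le_expect_pow_card fun k => sq_nonneg (z k)
  rw [prod_pow] at h
  nlinarith [sq_nonneg (∏ k, z k - 1)]

end Inequalities

section HitCount

variable {α : Type*} (S : Finset α) (P : α → Prop) [DecidablePred P]

/-- The words of length `n` over the alphabet `S`, the sample space for all expectations. -/
abbrev words (S : Finset α) (n : ℕ) : Finset (Fin n → α) :=
  Fintype.piFinset fun _ => S

theorem expect_words_succ {M : Type*} [AddCommMonoid M] [Module ℚ≥0 M] (S : Finset α) (n : ℕ)
    (F : (Fin (n + 1) → α) → M) :
    𝔼 u ∈ words S (n + 1), F u =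
      𝔼 s ∈ S, 𝔼 u ∈ words S n, F (Fin.cons s u) := by
  rw [← expect_product']
  refine expect_nbij' (fun u => (u 0, Fin.tail u)) (fun v => Fin.cons v.1 v.2) ?_ ?_ ?_ ?_ ?_
  all_goals simp +contextual [Fin.forall_fin_succ, Fin.tail]

/-- The number of letters of the word `u` that satisfy `P`. -/
def hitCount {n : ℕ} (u : Fin n → α) : ℕ := #{j | P (u j)}

/-- The probability that a uniform random element of `S` satisfies `P` (`0` if `S` is empty). Under
the uniform measure on words of length `n` over `S`, `hitCount P` is binomial with parameters `n`
and `hitRate S P`. -/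
noncomputable def hitRate : ℝ := #{s ∈ S | P s} / #S

theorem hitRate_nonneg : 0 ≤ hitRate S P := by unfold hitRate; positivity

theorem expect_ite_one_zero : 𝔼 s ∈ S, (if P s then 1 else 0 : ℝ) = hitRate S P := by
  rw [expect_eq_sum_div_card, sum_boole, hitRate]

theorem hitCount_cons {n : ℕ} (s : α) (u : Fin n → α) :
    hitCount P (Fin.cons s u : Fin (n + 1) → α) = hitCount P u + if P s then 1 else 0 := by
  simp only [hitCount, Fin.card_filter_univ_succ', Fin.cons_zero, Fin.cons_succ]
  exact add_comm _ _

theorem hitCount_of_length_zero (u : Fin 0 → α) : hitCount P u = 0 := by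
  simp [hitCount]

theorem expect_hitCount_mul (n : ℕ) (g : ℕ → ℝ) :
    𝔼 u ∈ words S (n + 1), hitCount P u * g (hitCount P u) =
      (n + 1) * hitRate S P *
        𝔼 u ∈ words S n, g (hitCount P u + 1) := by
  induction n generalizing g with
  | zero =>
    rw [expect_words_succ, ← expect_ite_one_zero]
    simp only [hitCount_cons, hitCount_of_length_zero, zero_add, CharP.cast_eq_zero, one_mul,
      expect_mul, expect_const (Fintype.piFinset_nonempty.2 fun i : Fin 0 => i.elim0)]
    refine expect_congr rfl fun s _ => ?_
    split_ifs <;> simp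
  | succ n ih =>
    have split (s : α) :
        𝔼 u ∈ words S (n + 1),
          hitCount P (Fin.cons s u : Fin (n + 2) → α) *
            g (hitCount P (Fin.cons s u : Fin (n + 2) → α)) =
        (n + 1) * hitRate S P * 𝔼 u ∈ words S n,
            g (hitCount P (Fin.cons s u : Fin (n + 1) → α) + 1) +
          (if P s then 1 else 0) *
            𝔼 u ∈ words S (n + 1), g (hitCount P u + 1) := by
      have := ih fun N => g (N + if P s then 1 else 0)
      simp only [hitCount_cons, add_right_comm _ 1] at this ⊢
      rw [← this, mul_expect, ← expect_add_distrib]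
      refine expect_congr rfl fun u _ => ?_
      split_ifs <;> push_cast <;> ring
    rw [expect_words_succ]
    simp only [split]
    rw [expect_add_distrib, ← mul_expect, ← expect_mul,
      ← expect_words_succ S n fun u => g (hitCount P u + 1), expect_ite_one_zero]
    push_cast
    ring

theorem expect_hitCount {S : Finset α} (hS : S.Nonempty) (n : ℕ) :
    𝔼 u ∈ words S n, (hitCount P u : ℝ) = n * hitRate S P := by
  cases n with
  | zero => simp [hitCount_of_length_zero]
  | succ n =>
    simpa [expect_const (Fintype.piFinset_nonempty.2 fun _ => hS)] using expect_hitCount_mul S P n 1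

theorem hitRate_pow_mul_expect_inv_ascFactorial_le_one (r n : ℕ) :
    hitRate S P ^ r * (n + 1).ascFactorial r *
      𝔼 u ∈ words S n, ((hitCount P u + 1).ascFactorial r : ℝ)⁻¹ ≤ 1 := by
  induction r generalizing n with
  | zero =>
    rcases (words S n).eq_empty_or_nonempty with h | h <;> simp [h]
  | succ r ih =>
    have cancel (N : ℕ) : N * (N.ascFactorial (r + 1) : ℝ)⁻¹ ≤ ((N + 1).ascFactorial r : ℝ)⁻¹ := by
      rcases N.eq_zero_or_pos with rfl | hN
      · simp
      · rw [Nat.ascFactorial_succ, ← Nat.succ_ascFactorial]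
        push_cast
        field_simp
        rfl
    calc _ = hitRate S P ^ r * (n + 2).ascFactorial r *
          ((n + 1) * hitRate S P * 𝔼 u ∈ words S n,
            ((hitCount P u + 1).ascFactorial (r + 1) : ℝ)⁻¹) := by
            rw [Nat.ascFactorial_succ, ← Nat.succ_ascFactorial]
            push_cast
            ring
      _ ≤ hitRate S P ^ r * (n + 2).ascFactorial r *
          𝔼 u ∈ words S (n + 1),
            ((hitCount P u + 1).ascFactorial r : ℝ)⁻¹ := by
            rw [← expect_hitCount_mul S P n fun N => (N.ascFactorial (r + 1) : ℝ)⁻¹]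
            have := hitRate_nonneg S P
            gcongr
            exact cancel _
      _ ≤ 1 := ih (n + 1)

theorem pow_mul_expect_inv_ascFactorial_le_one (r n : ℕ) :
    (n * hitRate S P) ^ r * 𝔼 u ∈ words S n,
      ((hitCount P u + 1).ascFactorial r : ℝ)⁻¹ ≤ 1 := by
  refine le_trans ?_ (hitRate_pow_mul_expect_inv_ascFactorial_le_one S P r n)
  have pow_le : (n : ℝ) ^ r ≤ (n + 1).ascFactorial r := mod_cast
    (Nat.pow_le_pow_left n.le_succ r).trans (Nat.pow_succ_le_ascFactorial _ r)
  have := hitRate_nonneg S P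
  rw [mul_pow, mul_comm ((n : ℝ) ^ r)]
  gcongr

end HitCount

section SimpleWalk

/-- The indicator of `[-y, y + 1]`, the endpoints that the reflection principle counts in
`stayProb`. -/
noncomputable def window (y e : ℤ) : ℝ := if e ∈ Set.Icc (-y) (y + 1) then 1 else 0

theorem window_sub_one_add_window_add_one {y : ℤ} (hy : 0 ≤ y) (e : ℤ) :
    window y (e - 1) + window y (e + 1) = window (y + 1) e + window (y - 1) e := by
  simp only [window, Set.mem_Icc]
  split_ifs <;> first | (exfalso; omega) | norm_num

/-- The probability that a simple walk of `N` steps `±1` on `ℤ`, started at `y`, never becomes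
negative. By the reflection principle this is the probability that a free simple walk started at `0`
ends in `[-y, y + 1]`, which is taken as the definition. -/
noncomputable def stayProb (N : ℕ) (y : ℤ) : ℝ :=
  (∑ ij ∈ antidiagonal N, N.choose ij.1 * window y (ij.1 - ij.2)) / 2 ^ N

theorem stayProb_zero_of_nonneg {y : ℤ} (hy : 0 ≤ y) : stayProb 0 y = 1 := by
  simp [stayProb, window]
  omega

theorem stayProb_of_neg (N : ℕ) {y : ℤ} (hy : y < 0) : stayProb N y = 0 := by
  have window_eq_zero (e : ℤ) : window y e = 0 := if_neg fun he => by
    rw [Set.mem_Icc] at he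
    omega
  simp [stayProb, window_eq_zero]

theorem stayProb_succ (N : ℕ) {y : ℤ} (hy : 0 ≤ y) :
    stayProb (N + 1) y = (stayProb N (y + 1) + stayProb N (y - 1)) / 2 := by
  have pascal := sum_antidiagonal_choose_succ_mul (R := ℝ) (fun i j => window y (i - j)) N
  have choose_symm : ∀ ij ∈ antidiagonal N, (N.choose ij.2 : ℝ) = N.choose ij.1 := fun ij hij => by
    rw [Nat.choose_symm_of_eq_add (HasAntidiagonal.mem_antidiagonal.1 hij).symm]
  have wave : ∀ ij ∈ antidiagonal N,
      N.choose ij.1 * window y (ij.1 - (ij.2 + 1 : ℕ)) +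
        N.choose ij.2 * window y ((ij.1 + 1 : ℕ) - ij.2) =
      N.choose ij.1 * window (y + 1) (ij.1 - ij.2) +
        N.choose ij.1 * window (y - 1) (ij.1 - ij.2) := fun ij hij => by
    rw [choose_symm ij hij, ← mul_add, ← mul_add, ← window_sub_one_add_window_add_one hy]
    push_cast
    ring_nf
  rw [stayProb, pascal, ← sum_add_distrib, sum_congr rfl wave, sum_add_distrib, stayProb, stayProb]
  field_simp
  ring

theorem stayProb_add_stayProb_div_two (N : ℕ) {y z : ℤ} (hy : 0 ≤ y)
    (hz : z = -1 ∨ z = 0 ∨ z = 1) :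
    (stayProb N (y + z) + stayProb N (y + -z)) / 2 = stayProb (N + if z ≠ 0 then 1 else 0) y := by
  rcases hz with rfl | rfl | rfl
  · simp [stayProb_succ N hy, ← sub_eq_add_neg, add_comm]
  · simp
  · simp [stayProb_succ N hy, ← sub_eq_add_neg]

theorem stayProb_zero (N : ℕ) : stayProb N 0 = N.choose ((N + 1) / 2) / 2 ^ N := by
  rw [stayProb, sum_eq_single ((N + 1) / 2, N / 2)]
  · rw [window, if_pos (by rw [Set.mem_Icc]; omega), mul_one]
  · intro ij hij hne
    rw [HasAntidiagonal.mem_antidiagonal] at hij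
    rw [window, if_neg, mul_zero]
    rw [Set.mem_Icc]
    rintro ⟨hlow, hhigh⟩
    exact hne (Prod.ext (by omega) (by omega))
  · intro h
    exact absurd (HasAntidiagonal.mem_antidiagonal.2 (by omega)) h

theorem stayProb_zero_pos (N : ℕ) : 0 < stayProb N 0 := by
  rw [stayProb_zero]
  have := Nat.choose_pos (show (N + 1) / 2 ≤ N by omega)
  positivity

theorem stayProb_two_mul (m : ℕ) : stayProb (2 * m) 0 = m.centralBinom / 4 ^ m := by
  rw [stayProb_zero, Nat.centralBinom_eq_two_mul_choose, pow_mul,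
    show (2 * m + 1) / 2 = m by omega]
  norm_num

theorem stayProb_two_mul_add_one (m : ℕ) :
    stayProb (2 * m + 1) 0 = (m + 1).centralBinom / 4 ^ (m + 1) := by
  have choose_eq : (m + 1).centralBinom = 2 * (2 * m + 1).choose (m + 1) := by
    rw [Nat.centralBinom_eq_two_mul_choose, mul_add_one, Nat.choose_succ_succ',
      Nat.choose_symm_half]
    ring
  have four_pow : (4 : ℝ) ^ (m + 1) = 2 * 2 ^ (2 * m + 1) := by
    rw [← pow_succ', show 2 * m + 1 + 1 = 2 * (m + 1) by ring, pow_mul]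
    norm_num
  rw [stayProb_zero, choose_eq, four_pow, show (2 * m + 1 + 1) / 2 = m + 1 by omega]
  push_cast
  field_simp

theorem centralBinom_sq_mul_wallis (m : ℕ) :
    ((m.centralBinom : ℝ) / 4 ^ m) ^ 2 * ((2 * m + 1) * Wallis.W m) = 1 := by
  have four_pow : (2 : ℝ) ^ (4 * m) = (4 ^ m) ^ 2 := by
    rw [← pow_mul, mul_comm m, pow_mul, pow_mul]
    norm_num
  rw [Wallis.W_eq_factorial_ratio, Nat.centralBinom_eq_two_mul_choose,
    Nat.cast_choose ℝ (show m ≤ 2 * m by omega), show 2 * m - m = m by omega, four_pow]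
  field_simp

theorem inv_le_half_pi_mul_centralBinom_sq (m : ℕ) :
    (2 * m + 1 : ℝ)⁻¹ ≤ π / 2 * ((m.centralBinom : ℝ) / 4 ^ m) ^ 2 := by
  rw [inv_le_iff_one_le_mul₀ (by positivity)]
  calc 1 = ((m.centralBinom : ℝ) / 4 ^ m) ^ 2 * ((2 * m + 1) * Wallis.W m) :=
        (centralBinom_sq_mul_wallis m).symm
    _ ≤ ((m.centralBinom : ℝ) / 4 ^ m) ^ 2 * ((2 * m + 1) * (π / 2)) := by
        gcongr
        exact Wallis.W_le m
    _ = _ := by ring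

theorem half_pi_mul_centralBinom_sq_le (m : ℕ) :
    π / 2 * ((m.centralBinom : ℝ) / 4 ^ m) ^ 2 ≤ (2 * m + 2) / (2 * m + 1) ^ 2 := by
  have wallis := Wallis.le_W m
  rw [div_mul_eq_mul_div, div_le_iff₀ (by positivity)] at wallis
  rw [le_div_iff₀ (by positivity)]
  calc π / 2 * ((m.centralBinom : ℝ) / 4 ^ m) ^ 2 * (2 * m + 1) ^ 2
      = ((m.centralBinom : ℝ) / 4 ^ m) ^ 2 * ((2 * m + 1) * ((2 * m + 1) * (π / 2))) := by ring
    _ ≤ ((m.centralBinom : ℝ) / 4 ^ m) ^ 2 * ((2 * m + 1) * (Wallis.W m * (2 * m + 2))) := by gcongr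
    _ = (2 * m + 2) * (((m.centralBinom : ℝ) / 4 ^ m) ^ 2 * ((2 * m + 1) * Wallis.W m)) := by ring
    _ = 2 * m + 2 := by rw [centralBinom_sq_mul_wallis, mul_one]

theorem inv_le_half_pi_mul_stayProb_sq (N : ℕ) :
    (N + 2 : ℝ)⁻¹ ≤ π / 2 * stayProb N 0 ^ 2 := by
  obtain ⟨m, rfl | rfl⟩ := Nat.even_or_odd' N
  · rw [stayProb_two_mul]
    refine le_trans ?_ (inv_le_half_pi_mul_centralBinom_sq m)
    push_cast
    gcongr
    norm_num
  · rw [stayProb_two_mul_add_one]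
    convert inv_le_half_pi_mul_centralBinom_sq (m + 1) using 2
    push_cast
    ring

theorem half_pi_mul_stayProb_sq_le (N : ℕ) :
    π / 2 * stayProb N 0 ^ 2 ≤ (N + 2) / (N + 1) ^ 2 := by
  obtain ⟨m, rfl | rfl⟩ := Nat.even_or_odd' N
  · rw [stayProb_two_mul]
    exact_mod_cast half_pi_mul_centralBinom_sq_le m
  · rw [stayProb_two_mul_add_one]
    refine (half_pi_mul_centralBinom_sq_le (m + 1)).trans ?_
    rw [div_le_div_iff₀ (by positivity) (by positivity)]
    push_cast
    nlinarith [m.cast_nonneg (α := ℝ)]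

theorem add_two_div_add_one_sq_mul_le {x r : ℝ} (hx : 0 ≤ x) (hr : 0 ≤ r) :
    (x + 2) / (x + 1) ^ 2 * (x + r + 2) ≤ 2 * (r + 2) := by
  rw [div_mul_eq_mul_div, div_le_iff₀ (by positivity)]
  nlinarith [mul_nonneg hx hr, mul_nonneg hx (mul_nonneg hx hr)]

theorem add_two_div_add_one_sq_mul_le_one_add {x r : ℝ} (hx : 0 ≤ x) (hr : 0 ≤ r) :
    (x + 2) / (x + 1) ^ 2 * (x + r + 1) ≤ 1 + 2 * (r + 2) * (r + 1) / (x + r + 2) := by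
  calc (x + 2) / (x + 1) ^ 2 * (x + r + 1)
      ≤ 1 + (r + 1) * ((x + 2) / (x + 1) ^ 2) := by
        rw [div_mul_eq_mul_div, mul_div_assoc', one_add_div (by positivity)]
        gcongr
        nlinarith
    _ ≤ 1 + (r + 1) * (2 * (r + 2) / (x + r + 2)) := by
        have := (le_div_iff₀ (by positivity)).2 (add_two_div_add_one_sq_mul_le hx hr)
        gcongr 1 + (r + 1) * ?_
    _ = 1 + 2 * (r + 2) * (r + 1) / (x + r + 2) := by ring

theorem exists_pow_le_inv_ascFactorial_add (r : ℕ) :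
    ∃ C : ℝ, 0 ≤ C ∧ ∀ N : ℕ, ((N + 2 : ℝ) / (N + 1) ^ 2) ^ r ≤
      ((N + 1).ascFactorial r : ℝ)⁻¹ + C * ((N + 1).ascFactorial (r + 1) : ℝ)⁻¹ := by
  induction r with
  | zero => exact ⟨0, le_rfl, by simp⟩
  | succ r ih =>
    obtain ⟨C, hC, hpow⟩ := ih
    refine ⟨2 * (r + 2) * (r + 1 + C), by positivity, fun N => ?_⟩
    set b : ℝ := (N + 2) / (N + 1) ^ 2
    set f : ℕ → ℝ := fun k => ((N + 1).ascFactorial k : ℝ)⁻¹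
    have f_eq (k : ℕ) : f k = (N + k + 1) * f (k + 1) := by
      simp only [f, Nat.ascFactorial_succ]
      push_cast
      field_simp
      ring
    calc b ^ (r + 1) = b * b ^ r := pow_succ' b r
      _ ≤ b * (f r + C * f (r + 1)) := by
        gcongr
        exact hpow N
      _ = b * (N + r + 1) * f (r + 1) + C * (b * (N + r + 2)) * f (r + 2) := by
        rw [f_eq r, f_eq (r + 1)]
        push_cast
        ring
      _ ≤ (1 + 2 * (r + 2) * (r + 1) / (N + r + 2)) * f (r + 1) +
          C * (2 * (r + 2)) * f (r + 2) := by
        gcongr ?_ * f (r + 1) + C * ?_ * f (r + 2)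
        · exact add_two_div_add_one_sq_mul_le_one_add N.cast_nonneg r.cast_nonneg
        · exact add_two_div_add_one_sq_mul_le N.cast_nonneg r.cast_nonneg
      _ = f (r + 1) + 2 * (r + 2) * (r + 1 + C) * f (r + 1 + 1) := by
        rw [add_mul, f_eq (r + 1)]
        push_cast
        field_simp
        ring

end SimpleWalk

section Expectation

variable {α ι : Type*} [Fintype ι] {S : Finset α}

theorem exists_expect_stayProb_sq_pow_le (P : α → Prop) [DecidablePred P] (hP : 0 < hitRate S P)
    (r : ℕ) :
    ∃ C : ℝ, 0 ≤ C ∧ ∀ n : ℕ, 1 ≤ n →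
      𝔼 u ∈ words S n, (n * hitRate S P * (π / 2 * stayProb (hitCount P u) 0 ^ 2)) ^ r ≤
        1 + C / (n * hitRate S P) := by
  obtain ⟨C, hC, pow_le⟩ := exists_pow_le_inv_ascFactorial_add r
  refine ⟨C, hC, fun n hn => ?_⟩
  have : (0 : ℝ) < n := mod_cast hn
  set p := hitRate S P
  let f (k : ℕ) (u : Fin n → α) : ℝ := ((hitCount P u + 1).ascFactorial k : ℝ)⁻¹
  calc 𝔼 u ∈ words S n, (n * p * (π / 2 * stayProb (hitCount P u) 0 ^ 2)) ^ r
      ≤ 𝔼 u ∈ words S n, (n * p) ^ r * (f r u + C * f (r + 1) u) := by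
        gcongr with u
        rw [mul_pow]
        gcongr
        refine le_trans ?_ (pow_le (hitCount P u))
        gcongr
        exact half_pi_mul_stayProb_sq_le _
    _ = (n * p) ^ r * 𝔼 u ∈ words S n, f r u +
          C / (n * p) * ((n * p) ^ (r + 1) * 𝔼 u ∈ words S n, f (r + 1) u) := by
        rw [← mul_expect, expect_add_distrib, ← mul_expect, pow_succ']
        field_simp
    _ ≤ 1 + C / (n * p) * 1 := by
        gcongr
        · exact pow_mul_expect_inv_ascFactorial_le_one S P r n
        · exact pow_mul_expect_inv_ascFactorial_le_one S P (r + 1) n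
    _ = 1 + C / (n * p) := by rw [mul_one]

variable (P : ι → α → Prop) [∀ k, DecidablePred (P k)]

theorem one_sub_sum_inv_le_expect_prod_stayProb (hS : S.Nonempty) (hP : ∀ k, 0 < hitRate S (P k))
    {n : ℕ} (hn : 1 ≤ n) :
    1 - ∑ k, (n * hitRate S (P k))⁻¹ ≤
      𝔼 u ∈ words S n, ∏ k, √(n * hitRate S (P k) * (π / 2)) * stayProb (hitCount (P k) u) 0 := by
  have : (0 : ℝ) < n := mod_cast hn
  have hwords : (words S n).Nonempty := Fintype.piFinset_nonempty.2 fun _ => hS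
  have inv_sq_le (k : ι) (N : ℕ) :
      ((√(n * hitRate S (P k) * (π / 2)) * stayProb N 0) ^ 2)⁻¹ ≤
        (N + 2) / (n * hitRate S (P k)) := by
    have := hP k
    rw [mul_pow, sq_sqrt (by positivity), mul_assoc (_ * _), mul_inv, mul_comm (_ * _)⁻¹,
      ← div_eq_mul_inv]
    gcongr
    exact inv_le_of_inv_le₀ (by positivity) (inv_le_half_pi_mul_stayProb_sq N)
  calc 1 - ∑ k, (n * hitRate S (P k))⁻¹
      = 1 + ∑ k, (1 - (n * hitRate S (P k) + 2) / (n * hitRate S (P k))) / 2 := by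
        rw [sub_eq_add_neg, ← sum_neg_distrib]
        congr! 2 with k
        have := hP k
        field_simp
        ring
    _ = 𝔼 u ∈ words S n,
          (1 + ∑ k, (1 - (hitCount (P k) u + 2) / (n * hitRate S (P k))) / 2) := by
        simp only [expect_add_distrib, expect_const hwords, expect_sum_comm, ← expect_div,
          expect_sub_distrib, expect_hitCount _ hS]
    _ ≤ _ := by
        gcongr with u
        refine le_trans ?_ (one_add_sum_one_sub_inv_sq_div_two_le_prod univ fun k _ => ?_)
        · gcongr
          exact inv_sq_le k _
        · have := hP k
          have := stayProb_zero_pos (hitCount (P k) u)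
          positivity

theorem exists_expect_prod_stayProb_le [Nonempty ι] (hS : S.Nonempty)
    (hP : ∀ k, 0 < hitRate S (P k)) :
    ∃ C : ℝ, 0 ≤ C ∧ ∀ n : ℕ, 1 ≤ n →
      𝔼 u ∈ words S n, ∏ k, √(n * hitRate S (P k) * (π / 2)) * stayProb (hitCount (P k) u) 0 ≤
        1 + C / n := by
  choose C hC expect_le using fun k =>
    exists_expect_stayProb_sq_pow_le (P k) (hP k) (Fintype.card ι)
  refine ⟨(𝔼 k, C k / hitRate S (P k)) / 2, ?_, fun n hn => ?_⟩
  · exact div_nonneg (expect_nonneg fun k _ => div_nonneg (hC k) (hP k).le) zero_le_two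
  have sq_eq (k : ι) (N : ℕ) : (√(n * hitRate S (P k) * (π / 2)) * stayProb N 0) ^ 2 =
      n * hitRate S (P k) * (π / 2 * stayProb N 0 ^ 2) := by
    have := hP k
    rw [mul_pow, sq_sqrt (by positivity), mul_assoc (_ * _)]
  calc 𝔼 u ∈ words S n, ∏ k, √(n * hitRate S (P k) * (π / 2)) * stayProb (hitCount (P k) u) 0
      ≤ 𝔼 u ∈ words S n, (1 + 𝔼 k, (n * hitRate S (P k) *
          (π / 2 * stayProb (hitCount (P k) u) 0 ^ 2)) ^ Fintype.card ι) / 2 := by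
        simp only [← sq_eq]
        exact expect_le_expect fun u _ => prod_le_one_add_expect_sq_pow_card_div_two _
    _ = (1 + 𝔼 k, 𝔼 u ∈ words S n, (n * hitRate S (P k) *
          (π / 2 * stayProb (hitCount (P k) u) 0 ^ 2)) ^ Fintype.card ι) / 2 := by
        rw [← expect_div, expect_add_distrib, expect_comm,
          expect_const (Fintype.piFinset_nonempty.2 fun _ => hS)]
    _ ≤ (1 + 𝔼 k, (1 + C k / (n * hitRate S (P k)))) / 2 := by
        gcongr with k
        exact expect_le k n hn
    _ = 1 + (𝔼 k, C k / hitRate S (P k)) / 2 / n := by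
        simp only [expect_add_distrib, expect_const univ_nonempty, mul_comm (n : ℝ), ← div_div,
          ← expect_div]
        ring

theorem exists_abs_expect_prod_stayProb_sub_one_le [Nonempty ι]
    (hP : ∀ k, 0 < hitRate S (P k)) :
    ∃ c : ℝ, 0 < c ∧ ∀ n : ℕ, 1 ≤ n →
      |𝔼 u ∈ words S n, ∏ k, √(n * hitRate S (P k) * (π / 2)) * stayProb (hitCount (P k) u) 0 - 1|
        ≤ c / n := by
  have hS : S.Nonempty := nonempty_iff_ne_empty.2 fun h => by
    simpa [hitRate, h] using hP (Classical.arbitrary ι)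
  obtain ⟨C, hC, upper⟩ := exists_expect_prod_stayProb_le P hS hP
  have sum_pos : 0 < ∑ k, (hitRate S (P k))⁻¹ :=
    sum_pos (fun k _ => inv_pos.2 (hP k)) univ_nonempty
  refine ⟨∑ k, (hitRate S (P k))⁻¹ + C, by positivity, fun n hn => ?_⟩
  have lower := one_sub_sum_inv_le_expect_prod_stayProb P hS hP hn
  simp only [mul_inv, inv_mul_eq_div, ← sum_div] at lower
  rw [abs_le, add_div]
  have : 0 ≤ C / n := by positivity
  have : 0 ≤ (∑ k, (hitRate S (P k))⁻¹) / n := by positivity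
  constructor <;> linarith [upper n hn]

end Expectation

section Walk

variable {ι : Type*}

/-- The walk from `x` with steps `u` stays in the non-negative orthant; the starting point `x`
is not itself constrained. -/
def IsConfined {n : ℕ} (x : ι → ℤ) (u : Fin n → ι → ℤ) : Prop :=
  ∀ k m, 0 ≤ x m + ∑ j ∈ Iic k, u j m

theorem isConfined_cons {n : ℕ} (x s : ι → ℤ) (u : Fin n → ι → ℤ) :
    IsConfined x (Fin.cons s u : Fin (n + 1) → ι → ℤ) ↔ 0 ≤ x + s ∧ IsConfined (x + s) u := by
  have Iic_eq (q : ℕ) (k : Fin q) : Iic k = univ.filter (· ≤ k) := by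
    ext
    simp
  simp only [IsConfined, Fin.forall_fin_succ (n := n), Iic_eq, sum_filter, Fin.sum_univ_succ]
  simp [add_assoc, Pi.le_def]

/-- The step `s` moves coordinate `k`. -/
abbrev Moves (k : ι) (s : ι → ℤ) : Prop := s k ≠ 0

variable [DecidableEq ι] {S : Finset (ι → ℤ)}

/-- The step set `S` is invariant under the reflection negating any one coordinate. -/
def AxisSymmetric (S : Finset (ι → ℤ)) : Prop :=
  ∀ j, ∀ i ∈ S, Function.update i j (-(i j)) ∈ S

theorem AxisSymmetric.expect_update_neg (hS : AxisSymmetric S) (k : ι) (F : (ι → ℤ) → ℝ) :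
    𝔼 s ∈ S, F (Function.update s k (-(s k))) = 𝔼 s ∈ S, F s :=
  expect_nbij' (fun s => Function.update s k (-(s k))) (fun s => Function.update s k (-(s k)))
    (hS k) (hS k) (by simp) (by simp) (by simp)

theorem AxisSymmetric.expect_apply_mul (hS : AxisSymmetric S) (k : ι) (f : ℤ → ℝ)
    {R : (ι → ℤ) → ℝ} (hR : ∀ s, R (Function.update s k (-(s k))) = R s) :
    𝔼 s ∈ S, f (s k) * R s = 𝔼 s ∈ S, (f (s k) + f (-(s k))) / 2 * R s := by
  have reflected := hS.expect_update_neg k fun s => f (s k) * R s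
  simp only [Function.update_self, hR] at reflected
  simp only [add_div, add_mul, div_mul_eq_mul_div, expect_add_distrib, ← expect_div, reflected]
  ring

theorem AxisSymmetric.expect_prod [Fintype ι] (hS : AxisSymmetric S) (g : ι → ℤ → ℝ) :
    𝔼 s ∈ S, ∏ k, g k (s k) = 𝔼 s ∈ S, ∏ k, (g k (s k) + g k (-(s k))) / 2 := by
  suffices partial_eq : ∀ K : Finset ι, 𝔼 s ∈ S, ∏ k, g k (s k) =
      𝔼 s ∈ S, (∏ k ∈ Kᶜ, g k (s k)) * ∏ k ∈ K, (g k (s k) + g k (-(s k))) / 2 by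
    simpa using partial_eq univ
  intro K
  induction K using Finset.induction_on with
  | empty => simp
  | insert a K ha ih =>
    have compl_eq : Kᶜ = insert a (insert a K)ᶜ := by
      rw [compl_insert, insert_erase (mem_compl.2 ha)]
    have ha' : a ∉ (insert a K)ᶜ := by simp
    rw [ih, compl_eq]
    simp only [prod_insert ha, prod_insert ha', mul_assoc]
    rw [hS.expect_apply_mul a (g a)]
    · exact expect_congr rfl fun s _ => mul_left_comm _ _ _
    · intro s
      congr! 1 <;>
      · refine prod_congr rfl fun k hk => ?_
        rw [Function.update_of_ne (ne_of_mem_of_not_mem hk ‹_›)]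

open scoped Classical in
theorem AxisSymmetric.expect_isConfined [Fintype ι] (hS : AxisSymmetric S)
    (hsmall : ∀ i ∈ S, ∀ m, i m = -1 ∨ i m = 0 ∨ i m = 1) (n : ℕ) {x : ι → ℤ} (hx : 0 ≤ x) :
    𝔼 u ∈ words S n, (if IsConfined x u then 1 else 0 : ℝ) =
      𝔼 u ∈ words S n, ∏ k, stayProb (hitCount (Moves k) u) (x k) := by
  induction n generalizing x with
  | zero =>
    simp [IsConfined, hitCount_of_length_zero, stayProb_zero_of_nonneg (hx _)]
  | succ n ih =>
    have first_step (s : ι → ℤ) :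
        𝔼 u ∈ words S n, (if IsConfined x (Fin.cons s u : Fin (n + 1) → ι → ℤ) then 1 else 0 : ℝ) =
          𝔼 u ∈ words S n, ∏ k, stayProb (hitCount (Moves k) u) (x k + s k) := by
      simp only [isConfined_cons]
      by_cases hxs : 0 ≤ x + s
      · simpa only [hxs, true_and, Pi.add_apply] using ih hxs
      · obtain ⟨m, hm⟩ : ∃ m, x m + s m < 0 := by simpa [Pi.le_def] using hxs
        simp only [hxs, false_and, if_false]
        exact expect_congr rfl fun u _ =>
          (prod_eq_zero (mem_univ m) (stayProb_of_neg _ hm)).symm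
    rw [expect_words_succ, expect_words_succ]
    simp only [first_step]
    rw [expect_comm, expect_comm (s := S)]
    refine expect_congr rfl fun u _ => ?_
    rw [hS.expect_prod fun k z => stayProb (hitCount (Moves k) u) (x k + z)]
    refine expect_congr rfl fun s hs => prod_congr rfl fun k _ => ?_
    rw [stayProb_add_stayProb_div_two _ (hx k) (hsmall s hs k), hitCount_cons]

theorem AxisSymmetric.walkCount_eq {d : ℕ} {S : Finset (Fin d → ℤ)} (hS : AxisSymmetric S)
    (hsmall : ∀ i ∈ S, ∀ m, i m = -1 ∨ i m = 0 ∨ i m = 1) (n : ℕ) :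
    (walkCount d S n : ℝ) =
      #S ^ n * 𝔼 u ∈ words S n, ∏ k, stayProb (hitCount (Moves k) u) 0 := by
  classical
  calc (walkCount d S n : ℝ) = #{u ∈ words S n | IsConfined 0 u} := by
        rw [walkCount, Nat.subtype_card]
        simp [IsConfined]
    _ = #S ^ n * 𝔼 u ∈ words S n, (if IsConfined 0 u then 1 else 0 : ℝ) := by
        rw [← sum_boole, ← card_mul_expect, Fintype.card_piFinset_const, Nat.cast_pow]
    _ = _ := by rw [hS.expect_isConfined hsmall n le_rfl]; rfl

theorem AxisSymmetric.hitRate_moves (hS : AxisSymmetric S)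
    (hsmall : ∀ i ∈ S, ∀ m, i m = -1 ∨ i m = 0 ∨ i m = 1) (k : ι) :
    hitRate S (Moves k) = 2 * #{i ∈ S | i k = 1} / #S := by
  have reflected := hS.expect_update_neg k fun s => if s k = 1 then 1 else 0
  have split : ∀ s ∈ S, (if Moves k s then 1 else 0 : ℝ) =
      (if s k = 1 then 1 else 0) + if -(s k) = 1 then 1 else 0 := fun s hs => by
    rcases hsmall s hs k with h | h | h <;> simp [h]
  simp only [Function.update_self] at reflected
  rw [← expect_ite_one_zero, expect_congr rfl split, expect_add_distrib, reflected,
    expect_ite_one_zero, hitRate]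
  ring

end Walk

theorem prod_sqrt_mul_eq_rpow {ι : Type*} [Fintype ι] {σ : ι → ℝ}
    (hσ : ∀ k, 0 < σ k) {x m : ℝ} (hx : 0 ≤ x) (hm : 0 < m) :
    (∏ k, √(x * (2 * σ k / m) * (π / 2))) *
        ((∏ k, σ k) ^ (-(1 : ℝ) / 2) * π ^ (-(Fintype.card ι : ℝ) / 2) *
          m ^ ((Fintype.card ι : ℝ) / 2)) =
      x ^ ((Fintype.card ι : ℝ) / 2) := by
  have sqrt_eq (k : ι) : √(x * (2 * σ k / m) * (π / 2)) = √x * √π / √m * √(σ k) := by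
    rw [← sqrt_mul hx, ← sqrt_div (by positivity), ← sqrt_mul (by positivity)]
    congr 1
    field_simp
  have rpow_eq {y : ℝ} (hy : 0 ≤ y) : y ^ ((Fintype.card ι : ℝ) / 2) = √y ^ Fintype.card ι := by
    rw [rpow_div_two_eq_sqrt _ hy, rpow_natCast]
  have hprod : 0 < ∏ k, √(σ k) := prod_pos fun k _ => sqrt_pos.2 (hσ k)
  have prod_rpow_eq : (∏ k, σ k) ^ ((1 : ℝ) / 2) = ∏ k, √(σ k) := by
    rw [← sqrt_eq_rpow, sqrt_prod _ fun k _ => (hσ k).le]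
  simp only [sqrt_eq, neg_div, rpow_neg (prod_nonneg fun k _ => (hσ k).le), rpow_neg pi_nonneg,
    rpow_eq hx, rpow_eq hm.le, rpow_eq pi_nonneg, prod_rpow_eq, prod_mul_distrib, prod_const,
    card_univ, div_pow, mul_pow]
  field_simp

end OrthantWalk

open OrthantWalk in
theorem highly_symmetric_asymptotics_general
    (d : ℕ) (hd : 0 < d)
    (S : Finset (Fin d → ℤ))
    (hSsmall : ∀ i ∈ S, ∀ m : Fin d, i m = -1 ∨ i m = 0 ∨ i m = 1)
    (hsym : ∀ j : Fin d, ∀ i ∈ S, Function.update i j (-(i j)) ∈ S)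
    (hforward : ∀ j : Fin d, ∃ i ∈ S, i j = 1) :
    ∃ c : ℝ, 0 < c ∧ ∀ n : ℕ, 1 ≤ n →
      |(walkCount d S n : ℝ) * (S.card : ℝ) ^ (-(n : ℤ)) * (n : ℝ) ^ ((d : ℝ) / 2)
        - (∏ k : Fin d, ((S.filter (fun i => i k = 1)).card : ℝ)) ^ (-(1 : ℝ) / 2)
            * Real.pi ^ (-(d : ℝ) / 2) * (S.card : ℝ) ^ ((d : ℝ) / 2)|
      ≤ c / n := by
  have : Nonempty (Fin d) := ⟨⟨0, hd⟩⟩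
  set σ : Fin d → ℝ := fun k => #{i ∈ S | i k = 1}
  have hσ (k : Fin d) : 0 < σ k := by
    obtain ⟨i, hi, hik⟩ := hforward k
    exact Nat.cast_pos.2 (card_pos.2 ⟨i, mem_filter.2 ⟨hi, hik⟩⟩)
  have hS : (0 : ℝ) < #S := by
    obtain ⟨i, hi, -⟩ := hforward ⟨0, hd⟩
    exact Nat.cast_pos.2 (card_pos.2 ⟨i, hi⟩)
  have rate (k : Fin d) : hitRate S (Moves k) = 2 * σ k / #S :=
    AxisSymmetric.hitRate_moves hsym hSsmall k
  clear_value σ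
  obtain ⟨c, hc, expect_close⟩ := exists_abs_expect_prod_stayProb_sub_one_le (S := S) Moves
    fun k => by rw [rate]; have := hσ k; positivity
  simp only [rate, prod_mul_distrib, ← mul_expect] at expect_close
  set L : ℝ := (∏ k, σ k) ^ (-(1 : ℝ) / 2) * π ^ (-(d : ℝ) / 2) * (#S : ℝ) ^ ((d : ℝ) / 2)
  have hL : 0 < L := by have := prod_pos fun k (_ : k ∈ univ) => hσ k; positivity
  refine ⟨L * c, by positivity, fun n hn => ?_⟩
  have normalise : (∏ k, √(n * (2 * σ k / #S) * (π / 2))) * L = (n : ℝ) ^ ((d : ℝ) / 2) := by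
    simpa only [Fintype.card_fin] using prod_sqrt_mul_eq_rpow hσ n.cast_nonneg hS
  have factor (E R : ℝ) : |E * (R * L) - L| = L * |R * E - 1| := by
    rw [show E * (R * L) - L = L * (R * E - 1) by ring, abs_mul, abs_of_pos hL]
  rw [AxisSymmetric.walkCount_eq hsym hSsmall, zpow_neg, zpow_natCast, mul_right_comm (_ ^ n),
    mul_inv_cancel₀ (by positivity), one_mul, ← normalise, factor, mul_div_assoc]
  exact mul_le_mul_of_nonneg_left (expect_close n hn) hL.le

theorem highly_symmetric_asymptotics
    (d : ℕ) (hd : 0 < d)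
    (S : Finset (Fin d → ℤ))
    -- steps lie in {-1,0,1}^d \ {0}
    (hSsmall : ∀ i ∈ S, (∀ m : Fin d, i m = -1 ∨ i m = 0 ∨ i m = 1) ∧ i ≠ 0)
    -- the step set is symmetric over every axis
    (hsym : ∀ j : Fin d, ∀ i ∈ S, Function.update i j (-(i j)) ∈ S)
    -- a step forwards and backwards in each coordinate
    (hfb : ∀ j : Fin d, (∃ i ∈ S, i j = 1) ∧ (∃ i ∈ S, i j = -1)) :
    ∃ c : ℝ, 0 < c ∧ ∀ n : ℕ, 1 ≤ n →
      |(walkCount d S n : ℝ) * (S.card : ℝ) ^ (-(n : ℤ)) * (n : ℝ) ^ ((d : ℝ) / 2)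
        - (∏ k : Fin d, ((S.filter (fun i => i k = 1)).card : ℝ)) ^ (-(1 : ℝ) / 2)
            * Real.pi ^ (-(d : ℝ) / 2) * (S.card : ℝ) ^ ((d : ℝ) / 2)|
      ≤ c / n := by
  exact highly_symmetric_asymptotics_general d hd S (fun i hi => (hSsmall i hi).1) hsym
    fun j => (hfb j).1
end
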